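/- arXiv:2302.13478 — 7 statements merged into one kernel-verified Lean document; each statement's English description precedes it below -/
import Mathlib

section
/- For any a ∈ F_q \ F_2 with Tr(1/a) ≠ Tr(1), the polynomial X^(2q^ℓ+1) + X + a has a unique root in F_{q³} for every nonnegative integer ℓ. This root equals e^n + e^(−n), where e ∈ F_{q²} satisfies e² + ae = 1 and n := (2q−1)/3 if m is odd and n := (q+2)/3 if m is even. -/
open Polynomial

local notation "K" => AlgebraicClosure (ZMod 2)

/-! The hypothesis `Tr(1/a) ≠ Tr(1)` says that `u² + u = 1 + 1/a` has no solution in `F_q`. It has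
none in `F_{q³}` either, because passing to `F_{q³}` multiplies traces of elements of `F_q` by
`3 = 1`. For a root `x` in `F_{q³}`, its images `x, y, z` under the iterates of `t ↦ t^(q^ℓ)` solve
the cyclic system `x y² + x = y z² + y = z x² + z = a`. Unless `x³ + x = a`, the inverse of
`x + y + z + xy + yz + zx` solves `u² + u = 1 + 1/a`; and if `x³ + x = a` had two distinct roots,
their quadratic resolvent would yield such a `u` as well. Hence there is at most one root. The trace
condition also makes `e` the cube of `t = e^n`, so that
`(t + 1/t)³ + (t + 1/t) = t³ + 1/t³ = e + 1/e = a`, and `t + 1/t` lies in `F_q`. -/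

lemma pow_pow_eq_self {M : Type*} [Monoid M] {x : M} {q : ℕ} (hx : x ^ q = x) (k : ℕ) :
    x ^ q ^ k = x := by
  induction k with
  | zero => simp
  | succ k ih => rw [pow_succ, pow_mul, ih, hx]

section AbsTrace

variable {R : Type*} [CommRing R]

/-- The trace polynomial `b + b² + b⁴ + ⋯ + b^(2^(n-1))`, evaluated at any `b`. It is the trace from
`F_{2^n}` to `F_2` when `b ^ 2 ^ n = b`. -/
def absTrace (n : ℕ) (b : R) : R := ∑ i ∈ Finset.range n, b ^ 2 ^ i

lemma absTrace_one (n : ℕ) : absTrace n (1 : R) = n := by simp [absTrace]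

lemma absTrace_succ (n : ℕ) (b : R) : absTrace (n + 1) b = absTrace n b + b ^ 2 ^ n :=
  Finset.sum_range_succ _ n

lemma absTrace_mul {m : ℕ} {b : R} (hb : b ^ 2 ^ m = b) (k : ℕ) :
    absTrace (k * m) b = k * absTrace m b := by
  have pow_periodic (j i : ℕ) : b ^ 2 ^ (j * m + i) = b ^ 2 ^ i := by
    rw [pow_add, mul_comm j, pow_mul, pow_mul, pow_pow_eq_self hb]
  induction k with
  | zero => simp [absTrace]
  | succ k ih =>
    rw [absTrace] at ih
    rw [absTrace, Nat.succ_mul, Finset.sum_range_add, ih]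
    simp only [pow_periodic, absTrace]
    push_cast
    ring

variable [CharP R 2]

lemma absTrace_add (n : ℕ) (b c : R) : absTrace n (b + c) = absTrace n b + absTrace n c := by
  simp only [absTrace, add_pow_char_pow, Finset.sum_add_distrib]

lemma absTrace_sq (n : ℕ) (b : R) : absTrace n (b ^ 2) = absTrace n b ^ 2 := by
  simp only [absTrace, sum_pow_char 2, pow_right_comm]

lemma absTrace_sq_add_self (n : ℕ) (u : R) : absTrace n (u ^ 2 + u) = u ^ 2 ^ n + u := by
  induction n with
  | zero => simp [absTrace, CharTwo.add_self_eq_zero]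
  | succ n ih =>
    rw [absTrace_succ, ih, add_pow_char_pow, ← pow_mul, ← pow_succ']
    linear_combination u ^ 2 ^ n * CharTwo.two_eq_zero (R := R)

lemma absTrace_sq_eq_self {n : ℕ} {b : R} (hb : b ^ 2 ^ n = b) :
    absTrace n b ^ 2 = absTrace n b := by
  rw [← CharTwo.add_eq_zero, ← absTrace_sq, ← absTrace_add, absTrace_sq_add_self, hb,
    CharTwo.add_self_eq_zero]

lemma absTrace_eq_natCast_of_sq_add_self_eq {n : ℕ} {u b : R} (hu : u ^ 2 ^ n = u)
    (h : u ^ 2 + u = 1 + b) : absTrace n b = n := by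
  rw [← CharTwo.add_eq_zero, add_comm, ← absTrace_one, ← absTrace_add, ← h, absTrace_sq_add_self,
    hu, CharTwo.add_self_eq_zero]

lemma absTrace_eq_natCast_add_one_of_ne [IsDomain R] {n : ℕ} {b : R} (hb : b ^ 2 ^ n = b)
    (h : absTrace n b ≠ n) : absTrace n b = n + 1 := by
  have trace_cases : absTrace n b = 0 ∨ absTrace n b = 1 := by
    rw [← IsIdempotentElem.iff_eq_zero_or_one, IsIdempotentElem, ← sq, absTrace_sq_eq_self hb]
  rcases trace_cases with ht | ht <;> rcases CharTwo.natCast_cases (R := R) n with hn | hn <;>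
    simp_all [CharTwo.add_self_eq_zero]

end AbsTrace

lemma cyclic_system_symmetric_relations {R : Type*} [CommRing R] [CharP R 2] {a x y z s v p : R}
    (hxy : x * y ^ 2 + x + a = 0) (hyz : y * z ^ 2 + y + a = 0) (hzx : z * x ^ 2 + z + a = 0)
    (hs : s = x + y + z) (hv : v = s + (x * y + y * z + z * x)) (hp : p = x * y * z) :
    v ^ 2 = a * s ∧ p * s = (a + 1) * s + v ∧ p * (1 + v + p) ^ 2 = a ^ 3 := by
  subst hv hs hp
  refine ⟨by grind, by grind, ?_⟩
  have hx : x * (y + 1) ^ 2 = a := by grind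
  have hy : y * (z + 1) ^ 2 = a := by grind
  have hz : z * (x + 1) ^ 2 = a := by grind
  calc
    _ = x * (y + 1) ^ 2 * (y * (z + 1) ^ 2) * (z * (x + 1) ^ 2) := by ring
    _ = a ^ 3 := by rw [hx, hy, hz]; ring

section CyclicSystem

variable {L : Type*} [Field L] [CharP L 2] {a : L}

lemma exists_sq_add_self_eq_of_cubic_roots_ne (ha : a ≠ 0) {x c : L} (hx : x ^ 3 + x + a = 0)
    (hc : c ^ 3 + c + a = 0) (hne : x ≠ c) : ∃ u : L, u ^ 2 + u = 1 + a⁻¹ := by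
  have two_eq_zero : (2 : L) = 0 := CharTwo.two_eq_zero
  have sum_products : x ^ 2 + c * x + c ^ 2 = 1 := by
    refine mul_left_cancel₀ (sub_ne_zero.mpr hne) ?_
    linear_combination hx - hc - (x - c) * two_eq_zero
  -- The third root is `x + c`, and `x³ + x²c + c³` is the resolvent `x²c + c²(x + c) + (x + c)²x`.
  refine ⟨(x ^ 3 + x ^ 2 * c + c ^ 3 + 1) / a, ?_⟩
  field_simp
  grind

lemma cyclic_system_sum_ne_zero (ha : a ≠ 0) {x y z : L} (hxy : x * y ^ 2 + x + a = 0)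
    (hyz : y * z ^ 2 + y + a = 0) (hzx : z * x ^ 2 + z + a = 0) : x + y + z ≠ 0 := by
  intro sum_eq_zero
  obtain ⟨hvs, -, -⟩ := cyclic_system_symmetric_relations hxy hyz hzx rfl rfl rfl
  have sum_products : x * y + y * z + z * x = 0 := by
    simpa [sum_eq_zero] using hvs
  obtain rfl : x + y = z := CharTwo.add_eq_zero.mp sum_eq_zero
  have sum_sq : (x + y) ^ 2 = x * y := by
    linear_combination sum_products - x * y * CharTwo.two_eq_zero (R := L)
  obtain rfl : x = y := by linear_combination hxy - hyz + y * sum_sq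
  exact ha (by simpa [CharTwo.add_self_eq_zero] using hzx)

lemma sq_add_self_eq_or_eq_pow_of_symmetric_relations (ha : a ≠ 0) {s v p : L} (hs : s ≠ 0)
    (hvs : v ^ 2 = a * s) (hps : p * s = (a + 1) * s + v) (hpv : p * (1 + v + p) ^ 2 = a ^ 3) :
    v⁻¹ ^ 2 + v⁻¹ = 1 + a⁻¹ ∨ s ^ 3 + s + a = 0 ∧ v = s + s ^ 2 ∧ p = s ^ 3 := by
  have two_eq_zero : (2 : L) = 0 := CharTwo.two_eq_zero
  have hv : v ≠ 0 := by
    rintro rfl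
    exact mul_ne_zero ha hs (by rw [← hvs]; ring)
  obtain ⟨u, hu⟩ : ∃ u, u = v⁻¹ := ⟨_, rfl⟩
  rw [← hu]
  have huv : u * v = 1 := by rw [hu, inv_mul_cancel₀ hv]
  have hv_eq : v = a * u * s := by linear_combination u * hvs - v * huv
  have hsu : a * u ^ 2 * s = 1 := by linear_combination huv - u * hv_eq
  have hp_eq : p = 1 + a + a * u := mul_right_cancel₀ hs (by linear_combination hps + hv_eq)
  have cleared : (1 + a + a * u) * (1 + a * u + a * u ^ 2) ^ 2 = a ^ 3 * u ^ 2 := by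
    have scaled : u * (1 + v + p) = 1 + a * u + a * u ^ 2 := by
      linear_combination huv + u * hp_eq + u * two_eq_zero
    rw [← scaled, ← hp_eq]
    linear_combination u ^ 2 * hpv
  -- With `A = 1 + au + au²` this is `(A + a + au²) A² = a³u²`, that is,
  -- `(A + a) (A² + au² (A + a)) = 0`.
  have factored : (1 + a + a * u + a * u ^ 2) * (1 + a * u ^ 2 + a ^ 2 * u ^ 3) = 0 := by
    linear_combination cleared - (a * u + a ^ 2 * u + 2 * a ^ 2 * u ^ 2 + a ^ 2 * u ^ 3 +
      a ^ 3 * u ^ 3 + a ^ 3 * u ^ 4) * two_eq_zero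
  refine (mul_eq_zero.mp factored).imp (fun h ↦ ?_) (fun h ↦ ?_)
  · field_simp
    linear_combination h - (1 + a) * two_eq_zero
  · have hs_eq : s = 1 + a * u := by
      linear_combination -s * h + (1 + a * u) * hsu + s * two_eq_zero
    have sum_root : s ^ 3 + s + a = 0 := by grind
    exact ⟨sum_root, by grind, by grind⟩

lemma cubic_root_of_cyclic_system (ha : a ≠ 0) (hsol : ∀ u : L, u ^ 2 + u ≠ 1 + a⁻¹) {x y z : L}
    (hxy : x * y ^ 2 + x + a = 0) (hyz : y * z ^ 2 + y + a = 0) (hzx : z * x ^ 2 + z + a = 0) :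
    x ^ 3 + x + a = 0 := by
  obtain ⟨hvs, hps, hpv⟩ := cyclic_system_symmetric_relations hxy hyz hzx rfl rfl rfl
  obtain ⟨sum_root, hv, hp⟩ := (sq_add_self_eq_or_eq_pow_of_symmetric_relations ha
    (cyclic_system_sum_ne_zero ha hxy hyz hzx) hvs hps hpv).resolve_left (hsol _)
  have hx : x = x + y + z := by
    -- With `s = x + y + z`, the monic cubic with roots `x, y, z` is `(T + s)³`.
    refine sub_eq_zero.mp (pow_eq_zero_iff three_ne_zero |>.mp ?_)
    grind
  rwa [← hx] at sum_root

lemma eq_of_mul_map_sq_add_self_add_eq_zero (ha : a ≠ 0) (hsol : ∀ u : L, u ^ 2 + u ≠ 1 + a⁻¹)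
    (τ : L →+* L) (hτa : τ a = a) {x c : L} (hτx : τ (τ (τ x)) = x)
    (hx : x * τ x ^ 2 + x + a = 0) (hc : c ^ 3 + c + a = 0) : x = c := by
  have hy : τ x * τ (τ x) ^ 2 + τ x + a = 0 := by simpa [hτa] using congrArg τ hx
  have hz : τ (τ x) * x ^ 2 + τ (τ x) + a = 0 := by simpa [hτa, hτx] using congrArg τ hy
  by_contra hne
  obtain ⟨u, hu⟩ := exists_sq_add_self_eq_of_cubic_roots_ne ha
    (cubic_root_of_cyclic_system ha hsol hx hy hz) hc hne
  exact hsol u hu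

end CyclicSystem

section CubeRoot

variable {m : ℕ}

lemma three_dvd_two_pow_add_two (hm : Even m) : 3 ∣ 2 ^ m + 2 := by
  obtain ⟨k, rfl⟩ := hm.two_dvd
  have four_pow_mod : (2 ^ 2) ^ k % 3 = 1 := by simp [Nat.pow_mod]
  rw [pow_mul]
  lia

lemma three_dvd_two_mul_two_pow_sub_one (hm : Odd m) : 3 ∣ 2 * 2 ^ m - 1 := by
  have dvd_succ := three_dvd_two_pow_add_two hm.add_one
  rw [pow_succ] at dvd_succ
  lia

variable {G : Type*} [GroupWithZero G] {e : G}

lemma pow_pow_three_eq_self_of_even (hm : Even m) (he : e ≠ 0) (heq : e ^ 2 ^ m = e⁻¹) :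
    (e ^ ((2 ^ m + 2) / 3)) ^ 3 = e := by
  rw [← pow_mul, Nat.div_mul_cancel (three_dvd_two_pow_add_two hm), pow_add, heq, sq,
    inv_mul_cancel_left₀ he]

lemma pow_pow_three_eq_self_of_odd (hm : Odd m) (he : e ≠ 0) (heq : e ^ 2 ^ m = e) :
    (e ^ ((2 * 2 ^ m - 1) / 3)) ^ 3 = e := by
  have one_le : 1 ≤ 2 * 2 ^ m := Nat.mul_pos two_pos (Nat.two_pow_pos m)
  rw [← pow_mul, Nat.div_mul_cancel (three_dvd_two_mul_two_pow_sub_one hm), pow_sub₀ e he one_le,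
    pow_mul', heq, sq, pow_one, mul_inv_cancel_right₀ he]

end CubeRoot

section ExplicitRoot

variable {F : Type*} [Field F] {m : ℕ} {a e : F}

lemma ne_zero_of_sq_add_mul_eq_one (he : e ^ 2 + a * e = 1) : e ≠ 0 := by
  rintro rfl
  simp at he

variable [CharP F 2]

lemma add_inv_pow_three_add_self {t : F} (ht : t ≠ 0) :
    (t + t⁻¹) ^ 3 + (t + t⁻¹) = t ^ 3 + (t ^ 3)⁻¹ := by
  field_simp
  linear_combination (2 * t ^ 4 + 2 * t ^ 2) * CharTwo.two_eq_zero (R := F)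

lemma pow_two_pow_eq_add_absTrace_mul (ha : a ≠ 0) (haq : a ^ 2 ^ m = a)
    (he : e ^ 2 + a * e = 1) : e ^ 2 ^ m = e + absTrace m a⁻¹ * a := by
  have artin_schreier : (e / a) ^ 2 + e / a = a⁻¹ ^ 2 := by
    field_simp
    linear_combination he
  have trace_eq : absTrace m a⁻¹ = e ^ 2 ^ m / a + e / a := by
    rw [← absTrace_sq_eq_self (by rw [inv_pow, haq]), ← absTrace_sq, ← artin_schreier,
      absTrace_sq_add_self, div_pow, haq]
  rw [trace_eq]
  field_simp
  linear_combination -e * CharTwo.two_eq_zero (R := F)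

lemma pow_two_pow_eq_add_natCast_add_one_mul (ha : a ≠ 0) (haq : a ^ 2 ^ m = a)
    (htr : absTrace m a⁻¹ ≠ m) (he : e ^ 2 + a * e = 1) : e ^ 2 ^ m = e + (m + 1) * a := by
  rw [pow_two_pow_eq_add_absTrace_mul ha haq he,
    absTrace_eq_natCast_add_one_of_ne (by rw [inv_pow, haq]) htr]

lemma pow_two_pow_eq_inv_of_even (hm : Even m) (ha : a ≠ 0) (haq : a ^ 2 ^ m = a)
    (htr : absTrace m a⁻¹ ≠ m) (he : e ^ 2 + a * e = 1) : e ^ 2 ^ m = e⁻¹ := by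
  rw [pow_two_pow_eq_add_natCast_add_one_mul ha haq htr he, CharTwo.natCast_eq_ite, if_pos hm]
  exact eq_inv_of_mul_eq_one_left (by linear_combination he)

lemma pow_two_pow_eq_self_of_odd (hm : Odd m) (ha : a ≠ 0) (haq : a ^ 2 ^ m = a)
    (htr : absTrace m a⁻¹ ≠ m) (he : e ^ 2 + a * e = 1) : e ^ 2 ^ m = e := by
  rw [pow_two_pow_eq_add_natCast_add_one_mul ha haq htr he, CharTwo.natCast_eq_ite,
    if_neg (Nat.not_even_iff_odd.mpr hm), CharTwo.add_self_eq_zero, zero_mul, add_zero]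

lemma add_inv_pow_two_pow_eq_self (heq : e ^ 2 ^ m = e ∨ e ^ 2 ^ m = e⁻¹) (n : ℕ) :
    (e ^ n + (e ^ n)⁻¹) ^ 2 ^ m = e ^ n + (e ^ n)⁻¹ := by
  rw [add_pow_char_pow, inv_pow, pow_right_comm]
  rcases heq with heq | heq
  · rw [heq]
  · rw [heq, inv_pow, inv_inv, add_comm]

lemma pow_two_pow_eq_self_or_inv (ha : a ≠ 0) (haq : a ^ 2 ^ m = a)
    (htr : absTrace m a⁻¹ ≠ m) (he : e ^ 2 + a * e = 1) : e ^ 2 ^ m = e ∨ e ^ 2 ^ m = e⁻¹ :=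
  (Nat.even_or_odd m).symm.imp (pow_two_pow_eq_self_of_odd · ha haq htr he)
    (pow_two_pow_eq_inv_of_even · ha haq htr he)

lemma pow_pow_three_eq_self (ha : a ≠ 0) (haq : a ^ 2 ^ m = a) (htr : absTrace m a⁻¹ ≠ m)
    (he : e ^ 2 + a * e = 1) {n : ℕ}
    (hn : n = if m % 2 = 1 then (2 * 2 ^ m - 1) / 3 else (2 ^ m + 2) / 3) : (e ^ n) ^ 3 = e := by
  have he0 := ne_zero_of_sq_add_mul_eq_one he
  rcases Nat.even_or_odd m with hm | hm
  · rw [hn, if_neg (by rw [Nat.even_iff.mp hm]; exact zero_ne_one)]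
    exact pow_pow_three_eq_self_of_even hm he0 (pow_two_pow_eq_inv_of_even hm ha haq htr he)
  · rw [hn, if_pos (Nat.odd_iff.mp hm)]
    exact pow_pow_three_eq_self_of_odd hm he0 (pow_two_pow_eq_self_of_odd hm ha haq htr he)

lemma cubic_add_inv_eq_zero (he : e ^ 2 + a * e = 1) {t : F} (ht : t ^ 3 = e) :
    (t + t⁻¹) ^ 3 + (t + t⁻¹) + a = 0 := by
  have he0 := ne_zero_of_sq_add_mul_eq_one he
  have ht0 : t ≠ 0 := by
    rintro rfl
    exact he0 (by rw [← ht, zero_pow three_ne_zero])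
  rw [add_inv_pow_three_add_self ht0, ht]
  field_simp
  linear_combination he + CharTwo.two_eq_zero (R := F)

end ExplicitRoot

section FrobeniusFixedField

variable {F : Type*} [Field F] [CharP F 2] {m : ℕ} {a : F}

variable (F) in
/-- The elements of `F` with `x ^ 2 ^ n = x`. For `n > 0`, if `F` contains a copy of
`F_{2^n}`, this is it. -/
def frobeniusFixedField (n : ℕ) : Subfield F :=
  (iterateFrobenius F 2 n).eqLocusField (RingHom.id F)

lemma mem_frobeniusFixedField {n : ℕ} {x : F} : x ∈ frobeniusFixedField F n ↔ x ^ 2 ^ n = x :=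
  Iff.rfl

lemma sq_add_self_ne_one_add_inv_of_odd {k : ℕ} (hk : Odd k) (haq : a ^ 2 ^ m = a)
    (htr : absTrace m a⁻¹ ≠ m) (u : frobeniusFixedField F (m * k)) :
    (u : F) ^ 2 + u ≠ 1 + a⁻¹ := by
  intro h
  have trace_eq := absTrace_eq_natCast_of_sq_add_self_eq (mem_frobeniusFixedField.mp u.2) h
  have natCast_eq_one : (k : F) = 1 := by
    rw [CharTwo.natCast_eq_ite, if_neg (Nat.not_even_iff_odd.mpr hk)]
  rw [mul_comm m, absTrace_mul (by rw [inv_pow, haq]), Nat.cast_mul, natCast_eq_one, one_mul,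
    one_mul] at trace_eq
  exact htr trace_eq

lemma eq_of_pow_add_self_add_eq_zero (ha : a ≠ 0) (haq : a ^ 2 ^ m = a)
    (htr : absTrace m a⁻¹ ≠ m) {c : F} (hcq : c ^ 2 ^ m = c) (hc : c ^ 3 + c + a = 0)
    {ℓ : ℕ} {x : F} (hxq : x ^ (2 ^ m) ^ 3 = x) (hx : x ^ (2 * (2 ^ m) ^ ℓ + 1) + x + a = 0) :
    x = c := by
  have hsol := sq_add_self_ne_one_add_inv_of_odd (k := 3) (by decide) haq htr
  have mem_of_pow_eq {t : F} (ht : t ^ (2 ^ m) ^ 3 = t) : t ∈ frobeniusFixedField F (m * 3) := by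
    rwa [mem_frobeniusFixedField, pow_mul]
  lift x to frobeniusFixedField F (m * 3) using mem_of_pow_eq hxq
  lift c to frobeniusFixedField F (m * 3) using mem_of_pow_eq (pow_pow_eq_self hcq 3)
  lift a to frobeniusFixedField F (m * 3) using mem_of_pow_eq (pow_pow_eq_self haq 3)
  norm_cast at ha haq hcq hc hxq hx hsol ⊢
  let τ := iterateFrobenius (frobeniusFixedField F (m * 3)) 2 (m * ℓ)
  have hτ (t : frobeniusFixedField F (m * 3)) : τ t = t ^ (2 ^ m) ^ ℓ := by
    rw [← pow_mul]
    rfl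
  refine eq_of_mul_map_sq_add_self_add_eq_zero ha hsol τ ?_ ?_ ?_ hc
  · rw [hτ, pow_pow_eq_self haq]
  · rw [hτ, hτ, hτ, ← pow_mul, ← pow_mul, ← pow_three, pow_right_comm, pow_pow_eq_self hxq]
  · rw [hτ, ← hx]
    ring

end FrobeniusFixedField

theorem unique_root_of_trace_ne_general {F : Type*} [Field F] [CharP F 2]
    (m : ℕ) (q : ℕ) (hq : q = 2 ^ m) (a : F) (haq : a ^ q = a) (ha : a ≠ 0)
    (htr : ∑ i ∈ Finset.range m, a⁻¹ ^ 2 ^ i ≠ (m : F))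
    (e : F) (he : e ^ 2 + a * e = 1)
    (n : ℕ) (hn : n = if m % 2 = 1 then (2 * q - 1) / 3 else (q + 2) / 3) (ℓ : ℕ) :
    {x : F | x ^ q ^ 3 = x ∧ x ^ (2 * q ^ ℓ + 1) + x + a = 0} = {e ^ n + (e ^ n)⁻¹} := by
  subst hq
  have hcq := add_inv_pow_two_pow_eq_self (pow_two_pow_eq_self_or_inv ha haq htr he) n
  have hc := cubic_add_inv_eq_zero he (pow_pow_three_eq_self ha haq htr he hn)
  ext x
  refine ⟨fun ⟨hxq, hx⟩ ↦ eq_of_pow_add_self_add_eq_zero ha haq htr hcq hc hxq hx, ?_⟩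
  rintro rfl
  refine ⟨pow_pow_eq_self hcq 3, ?_⟩
  rw [pow_succ, pow_mul', pow_pow_eq_self hcq, ← pow_succ]
  exact hc

/-- Proposition 2.8: for `q = 2^m` and `a ∈ F_q \ F_2` with `Tr(1/a) ≠ Tr(1)`, the
polynomial `X^(2q^ℓ+1) + X + a` has a unique root in `F_{q³}` for every `ℓ ≥ 0`,
namely `e^n + e^(−n)` where `e ∈ F_{q²}` satisfies `e² + ae = 1` and `n = (2q−1)/3`
or `(q+2)/3` according as `m` is odd or even. -/
theorem unique_root_of_trace_ne
    (m : ℕ) (hm : 0 < m) (q : ℕ) (hq : q = 2 ^ m)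
    (a : K) (haq : a ^ q = a) (ha2 : a ^ 2 ≠ a)
    (htr : ∑ i ∈ Finset.range m, a⁻¹ ^ 2 ^ i ≠ (m : K))
    (e : K) (heF : e ^ q ^ 2 = e) (he : e ^ 2 + a * e = 1)
    (n : ℕ) (hn : n = if m % 2 = 1 then (2 * q - 1) / 3 else (q + 2) / 3) :
    ∀ ℓ : ℕ, {x : K | x ^ q ^ 3 = x ∧ x ^ (2 * q ^ ℓ + 1) + x + a = 0}
      = {e ^ n + (e ^ n)⁻¹} :=
  unique_root_of_trace_ne_general m q hq a haq (fun h ↦ ha2 (by simp [h])) htr e he n hn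
end

section
/- Let Γ_ℓ be the set of roots in F_{q³} of X^(2q^ℓ+1) + X + 1, and N_ℓ its cardinality. Then N_ℓ = 3 if 3 divides m·(ℓ−m), and N_ℓ = 0 otherwise. Moreover, if 3 divides m, then Γ_ℓ is the set of roots of X³ + X + 1, and if ℓ ≡ m ≡ ±1 (mod 3), then Γ_ℓ is the set of roots of X³ + X² + 1. -/
open Polynomial

local notation "K" => AlgebraicClosure (ZMod 2)

/-!
Let `σ` be the `q ^ ℓ`-power Frobenius. A root `x` with `x ^ q ^ 3 = x` satisfies
`x * (σ x) ^ 2 + x + 1 = 0` and `σ³ x = x`, so with `y = σ x` and `z = σ² x` the equation and its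
two conjugates form a cyclic system. Eliminating `y` and `z` leaves `x ^ 8 = x`: all roots lie in
the field of 8 elements. There `σ` depends only on `m * ℓ` modulo 3, and the trinomial becomes
`X³ + X + 1`, `(X³ + X² + 1)(X² + X + 1)` or `X² + X + 1`, and `X² + X + 1` has no root there.
-/

theorem pow_pow_eq_self_of_dvd {M : Type*} [Monoid M] {x : M} {p k n : ℕ} (hx : x ^ p ^ k = x)
    (hkn : k ∣ n) : x ^ p ^ n = x := by
  have periodic : Function.IsPeriodicPt (fun y : M ↦ y ^ p) k x := by
    simpa only [Function.IsPeriodicPt, Function.IsFixedPt, pow_iterate] using hx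
  simpa only [Function.IsPeriodicPt, Function.IsFixedPt, pow_iterate] using
    periodic.trans_dvd hkn

theorem pow_pow_mod_eq {M : Type*} [Monoid M] {x : M} {p k : ℕ} (hx : x ^ p ^ k = x) (n : ℕ) :
    x ^ p ^ (n % k) = x ^ p ^ n := by
  conv_rhs => rw [← Nat.div_add_mod n k, pow_add, pow_mul,
    pow_pow_eq_self_of_dvd hx (Nat.dvd_mul_right k (n / k))]

section CharTwo

variable {R : Type*} [CommRing R] [CharP R 2]

theorem pow_eight_eq_self_of_cyclic_system {x y z : R} (hxy : x * y ^ 2 + x + 1 = 0)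
    (hyz : y * z ^ 2 + y + 1 = 0) (hzx : z * x ^ 2 + z + 1 = 0) : x ^ 8 = x := by
  have two_eq_zero : (2 : R) = 0 := CharTwo.two_eq_zero
  have hyz_sq : y ^ 2 * z ^ 4 + y ^ 2 + 1 = 0 := by
    have := congrArg (· ^ 2) hyz
    simpa only [CharTwo.add_sq, mul_pow, ← pow_mul, one_pow, zero_pow two_ne_zero] using this
  have hzx_pow_four : z ^ 4 * x ^ 8 + z ^ 4 + 1 = 0 := by
    have := congrArg (fun t ↦ (t ^ 2) ^ 2) hzx
    simpa only [CharTwo.add_sq, mul_pow, ← pow_mul, one_pow, zero_pow two_ne_zero] using this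
  -- Both `x + 1` and `x ^ 8 + 1` are inverse to `z ^ 4`.
  have inverse_left : z ^ 4 * (x + 1) = 1 := by
    linear_combination (z ^ 4 + 1) * hxy - x * hyz_sq - two_eq_zero
  linear_combination (x + 1) * hzx_pow_four - (x ^ 8 + 1) * inverse_left - (x + 1) * two_eq_zero

theorem pow_eight_eq_self_of_ringHom (σ : R →+* R) {x : R} (hσ : σ (σ (σ x)) = x)
    (hx : x * σ x ^ 2 + x + 1 = 0) : x ^ 8 = x := by
  have hσx : σ x * σ (σ x) ^ 2 + σ x + 1 = 0 := by simpa using congrArg σ hx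
  have hσσx : σ (σ x) * x ^ 2 + σ (σ x) + 1 = 0 := by simpa [hσ] using congrArg σ hσx
  exact pow_eight_eq_self_of_cyclic_system hx hσx hσσx

theorem pow_eight_sub_self_eq (x : R) :
    x ^ 8 - x = x * (x - 1) * (x ^ 3 + x + 1) * (x ^ 3 + x ^ 2 + 1) := by
  linear_combination (x ^ 4 - x ^ 5) * (CharTwo.two_eq_zero : (2 : R) = 0)

theorem isUnit_sq_add_self_add_one {x : R} (hx : x ^ 8 = x) : IsUnit (x ^ 2 + x + 1) := by
  refine IsUnit.of_mul_eq_one (x ^ 6 + x ^ 5 + x ^ 3 + x ^ 2 + 1) ?_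
  linear_combination hx + (x ^ 7 + x ^ 6 + x ^ 5 + x ^ 4 + x ^ 3 + x ^ 2 + x) *
    (CharTwo.two_eq_zero : (2 : R) = 0)

end CharTwo

/-- The set `Γ_ℓ` of roots of `X ^ (2 * q ^ ℓ + 1) + X + 1` in the field of `q ^ 3` elements,
membership in that field being encoded as `x ^ q ^ 3 = x` in an ambient ring `R`. -/
def trinomialRoots (R : Type*) [CommRing R] (q ℓ : ℕ) : Set R :=
  {x | x ^ q ^ 3 = x ∧ x ^ (2 * q ^ ℓ + 1) + x + 1 = 0}

namespace trinomialRoots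

variable {R : Type*} [CommRing R] [CharP R 2] {m ℓ : ℕ}

theorem pow_eight_eq_self {x : R} (hx : x ∈ trinomialRoots R (2 ^ m) ℓ) : x ^ 8 = x := by
  obtain ⟨x_fixed, x_root⟩ := hx
  apply pow_eight_eq_self_of_ringHom (iterateFrobenius R 2 (m * ℓ))
  · simp only [iterateFrobenius_def, ← pow_mul, ← pow_add]
    rw [← pow_mul] at x_fixed
    exact pow_pow_eq_self_of_dvd x_fixed ⟨ℓ, by ring⟩
  · rw [iterateFrobenius_def, ← x_root]
    ring

theorem mem_iff {x : R} : x ∈ trinomialRoots R (2 ^ m) ℓ ↔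
    x ^ 8 = x ∧ x ^ (2 * 2 ^ (m * ℓ % 3) + 1) + x + 1 = 0 := by
  have reduce_exponent (h8 : x ^ 2 ^ 3 = x) :
      x ^ (2 * 2 ^ (m * ℓ % 3) + 1) = x ^ (2 * (2 ^ m) ^ ℓ + 1) := by
    simp only [pow_succ, mul_comm 2, pow_mul x, pow_pow_mod_eq h8, ← pow_mul 2 m ℓ]
  constructor
  · intro hx
    have h8 := pow_eight_eq_self hx
    exact ⟨h8, reduce_exponent h8 ▸ hx.2⟩
  · rintro ⟨h8, x_root⟩
    have h8' : x ^ 2 ^ 3 = x := h8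
    refine ⟨?_, reduce_exponent h8' ▸ x_root⟩
    rw [← pow_mul]
    exact pow_pow_eq_self_of_dvd h8' (Nat.dvd_mul_left 3 m)

theorem eq_of_mul_mod_three_eq_zero (h : m * ℓ % 3 = 0) :
    trinomialRoots R (2 ^ m) ℓ = {x | x ^ 3 + x + 1 = 0} := by
  ext x
  rw [mem_iff, h]
  refine ⟨And.right, fun hx : x ^ 3 + x + 1 = 0 ↦ ⟨?_, hx⟩⟩
  rw [← sub_eq_zero, pow_eight_sub_self_eq, hx, mul_zero, zero_mul]

theorem eq_of_mul_mod_three_eq_one (h : m * ℓ % 3 = 1) :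
    trinomialRoots R (2 ^ m) ℓ = {x | x ^ 3 + x ^ 2 + 1 = 0} := by
  ext x
  have factorization :
      x ^ (2 * 2 ^ 1 + 1) + x + 1 = (x ^ 2 + x + 1) * (x ^ 3 + x ^ 2 + 1) := by
    linear_combination (-x ^ 4 - x ^ 3 - x ^ 2) * (CharTwo.two_eq_zero : (2 : R) = 0)
  rw [mem_iff, h, factorization, Set.mem_ofPred_eq]
  constructor
  · rintro ⟨h8, hx⟩
    exact (isUnit_sq_add_self_add_one h8).mul_right_eq_zero.mp hx
  · intro hx
    rw [← sub_eq_zero (a := x ^ 8), pow_eight_sub_self_eq, hx]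
    simp only [mul_zero, and_self]

theorem eq_empty_of_mul_mod_three_eq_two (h : m * ℓ % 3 = 2) :
    trinomialRoots R (2 ^ m) ℓ = ∅ := by
  have : Nontrivial R := CharP.nontrivial_of_char_ne_one (v := 2) (by decide)
  refine Set.eq_empty_of_forall_notMem fun x hx ↦ ?_
  rw [mem_iff, h] at hx
  obtain ⟨h8, x_root⟩ := hx
  refine (isUnit_sq_add_self_add_one h8).ne_zero ?_
  linear_combination x_root - x * h8

end trinomialRoots

section CountingRoots

variable {F : Type*} [Field F]

theorem ncard_roots_eq_natDegree_of_dvd {p f : F[X]} (hpf : p ∣ f) (separable : f.Separable)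
    (splits : f.Splits) : {x | p.eval x = 0}.ncard = p.natDegree := by
  have hp : p.Separable := separable.of_dvd hpf
  have roots_eq : {x | p.eval x = 0} = p.rootSet F := by
    ext x
    simp [mem_rootSet, hp.ne_zero]
  have hp_splits : (p.map (algebraMap F F)).Splits := by
    simpa using splits.of_dvd separable.ne_zero hpf
  rw [roots_eq, ← Nat.card_coe_set_eq, Nat.card_eq_fintype_card,
    card_rootSet_eq_natDegree hp hp_splits]

variable [CharP F 2]

theorem ncard_roots_cube_add_self_add_one (splits : (X ^ 8 - X : F[X]).Splits) :
    {x : F | x ^ 3 + x + 1 = 0}.ncard = 3 := by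
  have hdvd : (X ^ 3 + X + 1 : F[X]) ∣ X ^ 8 - X :=
    pow_eight_sub_self_eq (X : F[X]) ▸ (dvd_mul_left _ _).mul_right _
  have hdeg : (X ^ 3 + X + 1 : F[X]).natDegree = 3 := by compute_degree!
  simpa [hdeg] using
    ncard_roots_eq_natDegree_of_dvd hdvd (galois_poly_separable 2 8 (by decide)) splits

theorem ncard_roots_cube_add_sq_add_one (splits : (X ^ 8 - X : F[X]).Splits) :
    {x : F | x ^ 3 + x ^ 2 + 1 = 0}.ncard = 3 := by
  have hdvd : (X ^ 3 + X ^ 2 + 1 : F[X]) ∣ X ^ 8 - X :=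
    pow_eight_sub_self_eq (X : F[X]) ▸ dvd_mul_left _ _
  have hdeg : (X ^ 3 + X ^ 2 + 1 : F[X]).natDegree = 3 := by compute_degree!
  simpa [hdeg] using
    ncard_roots_eq_natDegree_of_dvd hdvd (galois_poly_separable 2 8 (by decide)) splits

end CountingRoots

theorem mul_mod_three_eq_one {m ℓ : ℕ} (hmod : ℓ % 3 = m % 3) (hm : m % 3 ≠ 0) :
    m * ℓ % 3 = 1 := by
  have : m % 3 = 1 ∨ m % 3 = 2 := by omega
  rcases this with h | h <;> simp [Nat.mul_mod, hmod, h]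

theorem mul_mod_three_eq_two {m ℓ : ℕ} (hm : m % 3 ≠ 0) (hℓ : ℓ % 3 ≠ 0)
    (hmod : ℓ % 3 ≠ m % 3) : m * ℓ % 3 = 2 := by
  have : m % 3 = 1 ∧ ℓ % 3 = 2 ∨ m % 3 = 2 ∧ ℓ % 3 = 1 := by omega
  rcases this with ⟨h, h'⟩ | ⟨h, h'⟩ <;> simp [Nat.mul_mod, h, h']

theorem three_dvd_mul_sub_iff (m ℓ : ℕ) :
    (3 : ℤ) ∣ (m : ℤ) * ((ℓ : ℤ) - (m : ℤ)) ↔ m % 3 = 0 ∨ ℓ % 3 = m % 3 := by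
  rw [Int.prime_three.dvd_mul]
  omega

theorem roots_a_eq_one_general {F : Type*} [Field F] [CharP F 2]
    (splits : (X ^ 8 - X : F[X]).Splits) (m ℓ : ℕ) (hℓ3 : Nat.Coprime ℓ 3) :
    ((3 : ℤ) ∣ (m : ℤ) * ((ℓ : ℤ) - (m : ℤ)) → (trinomialRoots F (2 ^ m) ℓ).ncard = 3) ∧
    (¬ (3 : ℤ) ∣ (m : ℤ) * ((ℓ : ℤ) - (m : ℤ)) → (trinomialRoots F (2 ^ m) ℓ).ncard = 0) ∧
    (3 ∣ m → trinomialRoots F (2 ^ m) ℓ = {x | x ^ 3 + x + 1 = 0}) ∧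
    (ℓ % 3 = m % 3 → m % 3 ≠ 0 →
      trinomialRoots F (2 ^ m) ℓ = {x | x ^ 3 + x ^ 2 + 1 = 0}) := by
  have roots_of_dvd (hm : 3 ∣ m) : trinomialRoots F (2 ^ m) ℓ = {x | x ^ 3 + x + 1 = 0} :=
    trinomialRoots.eq_of_mul_mod_three_eq_zero (Nat.mod_eq_zero_of_dvd (hm.mul_right ℓ))
  have roots_of_mod_eq (hmod : ℓ % 3 = m % 3) (hm : m % 3 ≠ 0) :
      trinomialRoots F (2 ^ m) ℓ = {x | x ^ 3 + x ^ 2 + 1 = 0} :=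
    trinomialRoots.eq_of_mul_mod_three_eq_one (mul_mod_three_eq_one hmod hm)
  refine ⟨fun hdvd ↦ ?_, fun hndvd ↦ ?_, roots_of_dvd, roots_of_mod_eq⟩
  · by_cases hm : m % 3 = 0
    · rw [roots_of_dvd (Nat.dvd_of_mod_eq_zero hm), ncard_roots_cube_add_self_add_one splits]
    · have hmod : ℓ % 3 = m % 3 := ((three_dvd_mul_sub_iff m ℓ).mp hdvd).resolve_left hm
      rw [roots_of_mod_eq hmod hm, ncard_roots_cube_add_sq_add_one splits]
  · rw [three_dvd_mul_sub_iff, not_or] at hndvd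
    have hℓ : ℓ % 3 ≠ 0 := fun h ↦
      Nat.prime_three.coprime_iff_not_dvd.mp hℓ3.symm (Nat.dvd_of_mod_eq_zero h)
    rw [trinomialRoots.eq_empty_of_mul_mod_three_eq_two
      (mul_mod_three_eq_two hndvd.1 hℓ hndvd.2), Set.ncard_empty]

/-- Corollary 4.4 (the case `a = 1`): `N_ℓ = 3` if `3 ∣ m(ℓ−m)` and `N_ℓ = 0` otherwise;
if `3 ∣ m` then `Γ_ℓ` is the set of roots of `X³ + X + 1`, and if `ℓ ≡ m ≡ ±1 (mod 3)`
then `Γ_ℓ` is the set of roots of `X³ + X² + 1`. -/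
theorem roots_a_eq_one
    (m : ℕ) (hm : 0 < m) (q : ℕ) (hq : q = 2 ^ m)
    (ℓ : ℕ) (hℓ : 0 < ℓ) (hℓ3 : Nat.Coprime ℓ 3)
    (Γ : Set K)
    (hΓ : Γ = {x : K | x ^ q ^ 3 = x ∧ x ^ (2 * q ^ ℓ + 1) + x + 1 = 0}) :
    ((3 : ℤ) ∣ (m : ℤ) * ((ℓ : ℤ) - (m : ℤ)) → Γ.ncard = 3) ∧
    (¬ (3 : ℤ) ∣ (m : ℤ) * ((ℓ : ℤ) - (m : ℤ)) → Γ.ncard = 0) ∧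
    (3 ∣ m → Γ = {x : K | x ^ 3 + x + 1 = 0}) ∧
    (ℓ % 3 = m % 3 → m % 3 ≠ 0 → Γ = {x : K | x ^ 3 + x ^ 2 + 1 = 0}) := by
  subst hq hΓ
  exact roots_a_eq_one_general (IsAlgClosed.splits _) m ℓ hℓ3
end

section
/- For every β in the algebraic closure of F_q the following hold: (i) β ∈ F_{q³} and β^(2q²+1) + β + a = 0 if and only if f(β) = 0, β² ≠ 1, and a/(β²+1) = β^q; (ii) β ∈ F_{q³} and β^(2q+1) + β + a = 0 if and only if f(β) = 0, β² ≠ 1, and (a/(β²+1))^q = β; (iii) β³ + β + a = 0 if and only if f(β) = 0, β² ≠ 1, and a/(β²+1) = β. -/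
open Polynomial

local notation "K" => AlgebraicClosure (ZMod 2)

/-!
In characteristic two `ρ(X) = a / (X² + 1)` is squaring followed by a Möbius map of determinant
`a`, so `ρ³` is a Möbius map of determinant `a⁷` in `X⁸`, and `f` is the numerator of `ρ³(X) - X`.
Hence, when `ρ³(x)` is defined, `f(x) = 0` means `ρ³(x) = x`. If `σ` is an endomorphism fixing `a`
(a power of Frobenius), then `ρ` commutes with `σ`, so `ρ(β) = σ β` gives `ρ³(β) = σ³ β`, and
`σ (ρ β) = β` gives `ρ³(σ³ β) = β`. As `f` has coefficients fixed by `σ`, it vanishes at `σ³ β`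
whenever it vanishes at `β`, so either way a root of `f` satisfies `σ³ β = β`.
-/

/-- The graph of the rational map `ρ(X) = a / (X² + 1)`: `TwistRel a x y` says that `ρ(x) = y`.
The denominator is cleared, so for `a ≠ 0` the relation forces `x² + 1 ≠ 0`. -/
def TwistRel {R : Type*} [CommSemiring R] (a x y : R) : Prop :=
  y * (x ^ 2 + 1) = a

/-- The polynomial `f`, the numerator of `ρ³(X) - X`. -/
noncomputable def twistPoly {R : Type*} [CommSemiring R] (a : R) : R[X] :=
  C (a ^ 2 + 1) * X ^ 9 + C a * X ^ 8 + C (a ^ 4 + a ^ 2 + 1) * X + C (a ^ 5 + a)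

section CommSemiring

variable {R S : Type*} [CommSemiring R] [CommSemiring S]

theorem TwistRel.map {a x y : R} (h : TwistRel a x y) (σ : R →+* S) :
    TwistRel (σ a) (σ x) (σ y) := by
  simpa [TwistRel] using congrArg σ h

theorem eval_twistPoly (a x : R) :
    (twistPoly a).eval x =
      (a ^ 2 + 1) * x ^ 9 + a * x ^ 8 + (a ^ 4 + a ^ 2 + 1) * x + (a ^ 5 + a) := by
  simp [twistPoly]

theorem map_twistPoly (a : R) (σ : R →+* S) : (twistPoly a).map σ = twistPoly (σ a) := by
  simp [twistPoly]

end CommSemiring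

section CharTwo

variable {R : Type*} [CommRing R] [CharP R 2] {a x y z w : R}

theorem pow_two_mul_add_one_add_add_eq_zero_iff_twistRel (a x : R) (n : ℕ) :
    x ^ (2 * n + 1) + x + a = 0 ↔ TwistRel a (x ^ n) x := by
  have factor : x ^ (2 * n + 1) + x = x * ((x ^ n) ^ 2 + 1) := by ring
  rw [factor, CharTwo.add_eq_zero, TwistRel]

theorem TwistRel.mul_eq_of_second_iterate (hxy : TwistRel a x y) (hyz : TwistRel a y z) :
    z * (x ^ 4 + (a ^ 2 + 1)) = a * (x ^ 4 + 1) := by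
  have squared : y ^ 2 * (x ^ 4 + 1) = a ^ 2 := by
    rw [← hxy, mul_pow, CharTwo.add_sq]
    ring
  rw [TwistRel] at hyz
  linear_combination (x ^ 4 + 1) * hyz - z * squared

theorem TwistRel.mul_eq_of_third_iterate
    (hxy : TwistRel a x y) (hyz : TwistRel a y z) (hzw : TwistRel a z w) :
    w * ((a ^ 2 + 1) * x ^ 8 + (a ^ 4 + a ^ 2 + 1)) = a * (x ^ 8 + (a ^ 4 + 1)) := by
  have squared : z ^ 2 * (x ^ 8 + (a ^ 4 + 1)) = a ^ 2 * (x ^ 8 + 1) := by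
    have := congrArg (· ^ 2) (hxy.mul_eq_of_second_iterate hyz)
    simp only [mul_pow, CharTwo.add_sq] at this
    linear_combination this
  rw [TwistRel] at hzw
  linear_combination (x ^ 8 + (a ^ 4 + 1)) * hzw - w * squared

theorem TwistRel.eval_twistPoly_eq
    (hxy : TwistRel a x y) (hyz : TwistRel a y z) (hzw : TwistRel a z w) :
    (twistPoly a).eval x = (w - x) * ((a ^ 2 + 1) * x ^ 8 + (a ^ 4 + a ^ 2 + 1)) := by
  rw [eval_twistPoly, CharTwo.sub_eq_add]
  linear_combination -hxy.mul_eq_of_third_iterate hyz hzw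

end CharTwo

section Field

variable {F : Type*} [Field F] [CharP F 2] {a x y z w : F}

theorem twistRel_iff_div_eq (ha : a ≠ 0) :
    TwistRel a x y ↔ x ^ 2 ≠ 1 ∧ a / (x ^ 2 + 1) = y := by
  rw [TwistRel, ne_eq, ← CharTwo.add_eq_zero (a := x ^ 2)]
  constructor
  · intro h
    have denom_ne_zero : x ^ 2 + 1 ≠ 0 := right_ne_zero_of_mul (h.trans_ne ha)
    exact ⟨denom_ne_zero, (div_eq_iff denom_ne_zero).mpr h.symm⟩
  · rintro ⟨denom_ne_zero, h⟩
    exact ((div_eq_iff denom_ne_zero).mp h).symm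

-- A common zero of numerator and denominator would make the determinant `a⁷` vanish.
theorem TwistRel.third_iterate_denom_ne_zero (ha : a ≠ 0)
    (hxy : TwistRel a x y) (hyz : TwistRel a y z) (hzw : TwistRel a z w) :
    (a ^ 2 + 1) * x ^ 8 + (a ^ 4 + a ^ 2 + 1) ≠ 0 := by
  intro denom_eq_zero
  have num_eq_zero := hxy.mul_eq_of_third_iterate hyz hzw
  rw [denom_eq_zero, mul_zero] at num_eq_zero
  refine pow_ne_zero 7 ha ?_
  linear_combination -(a ^ 2 + 1) * num_eq_zero - a * denom_eq_zero

theorem TwistRel.isRoot_twistPoly_iff (ha : a ≠ 0)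
    (hxy : TwistRel a x y) (hyz : TwistRel a y z) (hzw : TwistRel a z w) :
    (twistPoly a).IsRoot x ↔ w = x := by
  rw [IsRoot.def, hxy.eval_twistPoly_eq hyz hzw,
    mul_eq_zero_iff_right (hxy.third_iterate_denom_ne_zero ha hyz hzw), sub_eq_zero]

variable {σ : F →+* F}

theorem cube_fixed_and_twistRel_sq_iff (ha : a ≠ 0) (hσ : σ a = a) (β : F) :
    σ (σ (σ β)) = β ∧ TwistRel a (σ (σ β)) β ↔
      (twistPoly a).IsRoot β ∧ TwistRel a β (σ β) := by
  have map_rel {x y : F} (h : TwistRel a x y) : TwistRel a (σ x) (σ y) := hσ ▸ h.map σ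
  constructor
  · rintro ⟨fixed, h⟩
    have rel : TwistRel a β (σ β) := by simpa only [fixed] using map_rel h
    exact ⟨(rel.isRoot_twistPoly_iff ha (map_rel rel) h).mpr rfl, rel⟩
  · rintro ⟨root, rel⟩
    have rel₂ := map_rel (map_rel rel)
    have fixed := (rel.isRoot_twistPoly_iff ha (map_rel rel) rel₂).mp root
    exact ⟨fixed, by simpa only [fixed] using rel₂⟩

theorem cube_fixed_and_twistRel_iff (ha : a ≠ 0) (hσ : σ a = a) (β : F) :
    σ (σ (σ β)) = β ∧ TwistRel a (σ β) β ↔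
      (twistPoly a).IsRoot β ∧ ∃ y, TwistRel a β y ∧ σ y = β := by
  have map_rel {x y : F} (h : TwistRel a x y) : TwistRel a (σ x) (σ y) := hσ ▸ h.map σ
  have map_root {x : F} (h : (twistPoly a).IsRoot x) : (twistPoly a).IsRoot (σ x) := by
    simpa only [map_twistPoly, hσ] using h.map (f := σ)
  constructor
  · rintro ⟨fixed, h⟩
    have rel : TwistRel a β (σ (σ β)) := by
      simpa only [fixed] using map_rel (map_rel h)
    exact ⟨(rel.isRoot_twistPoly_iff ha (map_rel h) h).mpr rfl, _, rel, fixed⟩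
  · rintro ⟨root, y, rel, hy⟩
    have rel₁ : TwistRel a (σ β) β := by simpa only [hy] using map_rel rel
    have rel₂ := map_rel rel₁
    have fixed : β = σ (σ (σ β)) :=
      ((map_rel rel₂).isRoot_twistPoly_iff ha rel₂ rel₁).mp (map_root (map_root (map_root root)))
    exact ⟨fixed.symm, rel₁⟩

end Field

theorem twist_degree_three_general {F : Type*} [Field F] [CharP F 2]
    (m : ℕ) (q : ℕ) (hq : q = 2 ^ m) (a : F) (ha : a ≠ 0) (haq : a ^ q = a) :
    ∀ β : F,
      ((β ^ q ^ 3 = β ∧ β ^ (2 * q ^ 2 + 1) + β + a = 0) ↔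
        ((a ^ 2 + 1) * β ^ 9 + a * β ^ 8 + (a ^ 4 + a ^ 2 + 1) * β + (a ^ 5 + a) = 0 ∧
          β ^ 2 ≠ 1 ∧ a / (β ^ 2 + 1) = β ^ q)) ∧
      ((β ^ q ^ 3 = β ∧ β ^ (2 * q + 1) + β + a = 0) ↔
        ((a ^ 2 + 1) * β ^ 9 + a * β ^ 8 + (a ^ 4 + a ^ 2 + 1) * β + (a ^ 5 + a) = 0 ∧
          β ^ 2 ≠ 1 ∧ (a / (β ^ 2 + 1)) ^ q = β)) ∧
      ((β ^ 3 + β + a = 0) ↔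
        ((a ^ 2 + 1) * β ^ 9 + a * β ^ 8 + (a ^ 4 + a ^ 2 + 1) * β + (a ^ 5 + a) = 0 ∧
          β ^ 2 ≠ 1 ∧ a / (β ^ 2 + 1) = β)) := by
  intro β
  subst hq
  have frob (x : F) : iterateFrobenius F 2 m x = x ^ 2 ^ m := iterateFrobenius_def 2 m x
  have pow_sq (x : F) : x ^ (2 ^ m) ^ 2 = (x ^ 2 ^ m) ^ 2 ^ m := by rw [sq, pow_mul]
  have pow_cube (x : F) : x ^ (2 ^ m) ^ 3 = ((x ^ 2 ^ m) ^ 2 ^ m) ^ 2 ^ m := by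
    rw [pow_succ, pow_mul, pow_sq]
  have fixed : iterateFrobenius F 2 m a = a := (frob a).trans haq
  simp only [← eval_twistPoly, ← IsRoot.def]
  refine ⟨?_, ?_, ?_⟩
  · rw [pow_two_mul_add_one_add_add_eq_zero_iff_twistRel, ← twistRel_iff_div_eq ha, pow_cube,
      pow_sq]
    simpa only [frob] using cube_fixed_and_twistRel_sq_iff ha fixed β
  · rw [pow_two_mul_add_one_add_add_eq_zero_iff_twistRel, pow_cube]
    simpa only [frob, twistRel_iff_div_eq ha, and_assoc, exists_and_left, exists_eq_left']
      using cube_fixed_and_twistRel_iff ha fixed β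
  · rw [← twistRel_iff_div_eq ha]
    simpa [pow_two_mul_add_one_add_add_eq_zero_iff_twistRel a β 1] using
      cube_fixed_and_twistRel_sq_iff ha (RingHom.id_apply a) β

/-- Lemma 4.2: a characterization of roots of `H_2`, `H_1`, `H_0` via the polynomial
`f(X) = (a²+1)X⁹ + aX⁸ + (a⁴+a²+1)X + (a⁵+a)` and the rational map `ρ(X) = a/(X²+1)`. -/
theorem twist_degree_three
    (m : ℕ) (hm : 0 < m) (q : ℕ) (hq : q = 2 ^ m)
    (a : K) (ha : a ≠ 0) (haq : a ^ q = a)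
    (htr : ∑ i ∈ Finset.range m, a⁻¹ ^ 2 ^ i = (m : K)) :
    ∀ β : K,
      ((β ^ q ^ 3 = β ∧ β ^ (2 * q ^ 2 + 1) + β + a = 0) ↔
        ((a ^ 2 + 1) * β ^ 9 + a * β ^ 8 + (a ^ 4 + a ^ 2 + 1) * β + (a ^ 5 + a) = 0 ∧
          β ^ 2 ≠ 1 ∧ a / (β ^ 2 + 1) = β ^ q)) ∧
      ((β ^ q ^ 3 = β ∧ β ^ (2 * q + 1) + β + a = 0) ↔
        ((a ^ 2 + 1) * β ^ 9 + a * β ^ 8 + (a ^ 4 + a ^ 2 + 1) * β + (a ^ 5 + a) = 0 ∧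
          β ^ 2 ≠ 1 ∧ (a / (β ^ 2 + 1)) ^ q = β)) ∧
      ((β ^ 3 + β + a = 0) ↔
        ((a ^ 2 + 1) * β ^ 9 + a * β ^ 8 + (a ^ 4 + a ^ 2 + 1) * β + (a ^ 5 + a) = 0 ∧
          β ^ 2 ≠ 1 ∧ a / (β ^ 2 + 1) = β)) := by
  exact twist_degree_three_general m q hq a ha haq
end

section
/- The polynomial f(X) factors as f(X) = f_0(X)·f_1(X)·f_2(X), and f(X) has nine distinct roots in the algebraic closure of F_q. Moreover, every root β of f_0(X) satisfies a/(β²+1) = β; for each i ∈ {1,2}, the map β ↦ a/(β²+1) sends each root of f_i(X) to a root of f_i(X), fixes no root of f_i(X), and its threefold composition fixes every root of f_i(X). -/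
open Polynomial

local notation "K" => AlgebraicClosure (ZMod 2)

/-!
The map `ρ x = a / (x ^ 2 + 1)` is a Möbius transformation composed with the Frobenius, so `ρ³` is a
Möbius transformation in `x ^ 8`, and `f` is the polynomial of the fixed points of `ρ³`:
`f = X f' + a (X ^ 8 + a ^ 4 + 1)` and `ρ³ = a (X ^ 8 + a ^ 4 + 1) / f'`. Eliminating `X ^ 8` from
`f` and `f'` leaves a power of `a`, so `f` is separable. The fixed points of `ρ` are the roots of
`f₀`, which by separability are not roots of `f₁` or `f₂`. Finally
`(x ^ 2 + 1) ^ 3 * fᵢ (ρ x) = fᵢ x ^ 2` for `i = 1, 2`, so `ρ` maps roots of `fᵢ` to roots.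
-/

/-- The map `x ↦ a / (x ^ 2 + 1)`, with value `0` (by `a / 0 = 0`) rather than `∞` at the pole
`x ^ 2 = -1`. -/
def rho {F : Type*} [Field F] (a x : F) : F :=
  a / (x ^ 2 + 1)

section Polynomials

variable {R : Type*} [CommRing R]

/-- The polynomial `f`, whose roots are the fixed points of the third iterate of `rho a`. -/
noncomputable def nonic (a : R) : R[X] :=
  C (a ^ 2 + 1) * X ^ 9 + C a * X ^ 8 + C (a ^ 4 + a ^ 2 + 1) * X + C (a ^ 5 + a)

/-- The polynomial `f₀`, whose roots are the fixed points of `rho a`. -/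
noncomputable def fixedCubic (a : R) : R[X] :=
  X ^ 3 + X + C a

/-- The polynomial `f₁`, whose roots form a `3`-cycle of `rho a` when `a * (b ^ 2 + b + 1) = 1`.
The polynomial `f₂` is `orbitCubic a (b + 1)`. -/
noncomputable def orbitCubic (a b : R) : R[X] :=
  C (a * b ^ 2) * X ^ 3 + X ^ 2 + C (a * (b + 1) ^ 2) * X + C (a ^ 2 * b ^ 4)

theorem eval_nonic (a x : R) : (nonic a).eval x =
    (a ^ 2 + 1) * x ^ 9 + a * x ^ 8 + (a ^ 4 + a ^ 2 + 1) * x + (a ^ 5 + a) := by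
  simp [nonic]

theorem eval_fixedCubic (a x : R) : (fixedCubic a).eval x = x ^ 3 + x + a := by
  simp [fixedCubic]

theorem eval_orbitCubic (a b x : R) : (orbitCubic a b).eval x =
    a * b ^ 2 * x ^ 3 + x ^ 2 + a * (b + 1) ^ 2 * x + a ^ 2 * b ^ 4 := by
  simp [orbitCubic]

variable [CharP R 2]

theorem orbitCubic_add_one (a b : R) : orbitCubic a (b + 1) =
    C (a * (b + 1) ^ 2) * X ^ 3 + X ^ 2 + C (a * b ^ 2) * X + C (a ^ 2 * (b + 1) ^ 4) := by
  rw [orbitCubic, CharTwo.add_cancel_right]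

theorem derivative_nonic (a : R) :
    derivative (nonic a) = C (a ^ 2 + 1) * X ^ 8 + C (a ^ 4 + a ^ 2 + 1) := by
  have two_eq_zero : (2 : R[X]) = 0 := CharTwo.two_eq_zero
  simp only [nonic, derivative_add, derivative_C_mul_X_pow, derivative_C_mul_X, derivative_C,
    map_mul, map_natCast]
  push_cast
  linear_combination (4 * C (a ^ 2 + 1) * X ^ 8 + 4 * C a * X ^ 7) * two_eq_zero

theorem nonic_eq_X_mul_derivative_add (a : R) :
    nonic a = X * derivative (nonic a) + C a * (X ^ 8 + C (a ^ 4 + 1)) := by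
  rw [derivative_nonic]
  simp only [nonic, map_add, map_pow, map_one]
  ring

theorem orbitCubic_mul_orbitCubic_add_one {a b : R} (hab : a * (b ^ 2 + b + 1) = 1) :
    orbitCubic a b * orbitCubic a (b + 1) =
      C (a ^ 2 + 1) * X ^ 6 + C a * X ^ 5 + C (a ^ 2 + 1) * X ^ 4 + C (a ^ 3) * X ^ 3 + X ^ 2 +
        C a * X + C (a ^ 4 + 1) := by
  have hab' : C a * (C b ^ 2 + C b + 1) = 1 := by simpa using congrArg C hab
  rw [orbitCubic_add_one]
  simp only [orbitCubic, map_add, map_mul, map_pow, map_one]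
  grind

theorem nonic_eq_mul {a b : R} (hab : a * (b ^ 2 + b + 1) = 1) :
    nonic a = fixedCubic a * orbitCubic a b * orbitCubic a (b + 1) := by
  rw [mul_assoc, orbitCubic_mul_orbitCubic_add_one hab]
  simp only [nonic, fixedCubic, map_add, map_pow, map_one]
  grind

end Polynomials

section Field

variable {F : Type*} [Field F]

theorem ncard_setOf_isRoot_eq_natDegree [IsAlgClosed F] {p : F[X]} (hp : p.Separable) :
    {x : F | p.IsRoot x}.ncard = p.natDegree := by
  have rootSet_eq : {x : F | p.IsRoot x} = p.rootSet F := by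
    ext x
    simp [mem_rootSet, hp.ne_zero]
  rw [rootSet_eq, ← Nat.card_coe_set_eq, Nat.card_eq_fintype_card,
    card_rootSet_eq_natDegree hp (IsAlgClosed.splits _)]

variable [CharP F 2] {a b x : F}

theorem sq_add_one_eq_zero_iff : x ^ 2 + 1 = 0 ↔ x = 1 := by
  rw [CharTwo.add_eq_zero, ← CharTwo.sq_inj (x := x), one_pow]

theorem natDegree_nonic (ha : a ≠ 1) : (nonic a).natDegree = 9 := by
  have leadingCoeff_ne_zero : a ^ 2 + 1 ≠ 0 := sq_add_one_eq_zero_iff.not.mpr ha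
  rw [nonic]
  compute_degree!

theorem separable_nonic (ha : a ≠ 0) : (nonic a).Separable := by
  have bezout : C (a ^ 2 + 1) * nonic a + (C (a ^ 2 + 1) * X + C a) * derivative (nonic a) =
      C (a ^ 7) := by
    rw [derivative_nonic]
    simp only [nonic, map_add, map_pow, map_one]
    grind
  have inv_mul : C (a ^ 7)⁻¹ * C (a ^ 7) = 1 := by
    rw [← C_mul, inv_mul_cancel₀ (pow_ne_zero 7 ha), C_1]
  refine ⟨C (a ^ 7)⁻¹ * C (a ^ 2 + 1), C (a ^ 7)⁻¹ * (C (a ^ 2 + 1) * X + C a), ?_⟩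
  linear_combination C (a ^ 7)⁻¹ * bezout + inv_mul

theorem sq_add_one_ne_zero_of_isRoot_nonic (ha₀ : a ≠ 0) (ha₁ : a ≠ 1) (hx : (nonic a).IsRoot x) :
    x ^ 2 + 1 ≠ 0 := by
  have two_eq_zero : (2 : F) = 0 := CharTwo.two_eq_zero
  rw [Ne, sq_add_one_eq_zero_iff]
  rintro rfl
  have eval_one : a ^ 4 * (a + 1) = 0 := by
    rw [IsRoot, eval_nonic] at hx
    linear_combination hx - (a ^ 2 + a + 1) * two_eq_zero
  exact (mul_ne_zero (pow_ne_zero 4 ha₀) (CharTwo.add_eq_zero.not.mpr ha₁)) eval_one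

theorem pow_four_add_sq_add_one_ne_zero_of_isRoot_nonic (ha₀ : a ≠ 0) (ha₁ : a ≠ 1)
    (hx : (nonic a).IsRoot x) : x ^ 4 + a ^ 2 + 1 ≠ 0 := by
  intro hpole
  rw [IsRoot, eval_nonic] at hx
  have x_eq_zero : x = 0 := by
    have mul_eq_zero_of_pole : x * a ^ 6 = 0 := by grind
    exact (mul_eq_zero.mp mul_eq_zero_of_pole).resolve_right (pow_ne_zero 6 ha₀)
  subst x_eq_zero
  exact ha₁ (sq_add_one_eq_zero_iff.mp (by linear_combination hpole))

theorem rho_eq_self_iff (hx : x ^ 2 + 1 ≠ 0) : rho a x = x ↔ (fixedCubic a).IsRoot x := by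
  rw [rho, div_eq_iff hx, IsRoot, eval_fixedCubic, CharTwo.add_eq_zero, eq_comm]
  ring_nf

theorem rho_eq_self_of_isRoot_fixedCubic (ha : a ≠ 0) (hx : (fixedCubic a).IsRoot x) :
    rho a x = x := by
  refine (rho_eq_self_iff fun hpole ↦ ha ?_).mpr hx
  rw [IsRoot, eval_fixedCubic] at hx
  linear_combination hx - x * hpole

theorem rho_rho (hx : x ^ 2 + 1 ≠ 0) :
    rho a (rho a x) = a * (x ^ 4 + 1) / (x ^ 4 + a ^ 2 + 1) := by
  have sq_eq : (x ^ 2 + 1) ^ 2 = x ^ 4 + 1 := by rw [CharTwo.add_sq]; ring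
  have sq_ne_zero : x ^ 4 + 1 ≠ 0 := sq_eq ▸ pow_ne_zero 2 hx
  rw [rho, rho, div_pow, sq_eq, div_add_one sq_ne_zero, div_div_eq_mul_div]
  ring_nf

theorem rho_rho_rho (hx : x ^ 2 + 1 ≠ 0) (hx' : x ^ 4 + a ^ 2 + 1 ≠ 0) :
    rho a (rho a (rho a x)) = a * (x ^ 8 + a ^ 4 + 1) / (derivative (nonic a)).eval x := by
  have num_sq : (a * (x ^ 4 + 1)) ^ 2 = a ^ 2 * (x ^ 8 + 1) := by
    rw [mul_pow, CharTwo.add_sq]; ring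
  have den_sq : (x ^ 4 + a ^ 2 + 1) ^ 2 = x ^ 8 + a ^ 4 + 1 := by
    rw [CharTwo.add_sq, CharTwo.add_sq]; ring
  have den_sq_ne_zero : x ^ 8 + a ^ 4 + 1 ≠ 0 := den_sq ▸ pow_ne_zero 2 hx'
  rw [rho_rho hx, rho, div_pow, num_sq, den_sq, div_add_one den_sq_ne_zero, div_div_eq_mul_div,
    derivative_nonic]
  simp only [eval_add, eval_mul, eval_C, eval_pow, eval_X]
  ring_nf

theorem rho_rho_rho_eq_self (ha₀ : a ≠ 0) (ha₁ : a ≠ 1) (hx : (nonic a).IsRoot x) :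
    rho a (rho a (rho a x)) = x := by
  have derivative_ne_zero : (derivative (nonic a)).eval x ≠ 0 :=
    (separable_nonic ha₀).eval₂_derivative_ne_zero (RingHom.id F) hx
  have eval_eq_zero : x * (derivative (nonic a)).eval x + a * (x ^ 8 + a ^ 4 + 1) = 0 := by
    rw [IsRoot, nonic_eq_X_mul_derivative_add] at hx
    simpa [add_assoc] using hx
  rw [rho_rho_rho (sq_add_one_ne_zero_of_isRoot_nonic ha₀ ha₁ hx)
    (pow_four_add_sq_add_one_ne_zero_of_isRoot_nonic ha₀ ha₁ hx), div_eq_iff derivative_ne_zero]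
  exact (CharTwo.add_eq_zero.mp eval_eq_zero).symm

theorem pow_three_mul_eval_rho_orbitCubic (hab : a * (b ^ 2 + b + 1) = 1) (hx : x ^ 2 + 1 ≠ 0) :
    (x ^ 2 + 1) ^ 3 * (orbitCubic a b).eval (rho a x) = (orbitCubic a b).eval x ^ 2 := by
  calc (x ^ 2 + 1) ^ 3 * (orbitCubic a b).eval (rho a x)
      = a ^ 2 * (a ^ 2 * b ^ 2 + (x ^ 2 + 1) + (b + 1) ^ 2 * (x ^ 2 + 1) ^ 2 +
          b ^ 4 * (x ^ 2 + 1) ^ 3) := by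
        rw [eval_orbitCubic, rho]
        field_simp
    _ = (orbitCubic a b).eval x ^ 2 := by
        rw [eval_orbitCubic]
        clear hx
        grind

theorem isRoot_nonic_of_isRoot_orbitCubic (hab : a * (b ^ 2 + b + 1) = 1)
    (hx : (orbitCubic a b).IsRoot x) : (nonic a).IsRoot x := by
  refine hx.dvd ?_
  rw [nonic_eq_mul hab]
  exact (dvd_mul_left _ _).mul_right _

theorem isRoot_orbitCubic_rho (hab : a * (b ^ 2 + b + 1) = 1) (hx₁ : x ^ 2 + 1 ≠ 0)
    (hx : (orbitCubic a b).IsRoot x) : (orbitCubic a b).IsRoot (rho a x) := by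
  have eval_rho := pow_three_mul_eval_rho_orbitCubic hab hx₁
  rw [hx.eq_zero, zero_pow two_ne_zero] at eval_rho
  exact (mul_eq_zero.mp eval_rho).resolve_left (pow_ne_zero 3 hx₁)

theorem isCoprime_fixedCubic_orbitCubic (hab : a * (b ^ 2 + b + 1) = 1) :
    IsCoprime (fixedCubic a) (orbitCubic a b) := by
  have separable := separable_nonic (left_ne_zero_of_mul_eq_one hab)
  rw [nonic_eq_mul hab] at separable
  exact separable.of_mul_left.isCoprime

theorem rho_ne_self_of_isRoot_orbitCubic (hab : a * (b ^ 2 + b + 1) = 1) (hx₁ : x ^ 2 + 1 ≠ 0)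
    (hx : (orbitCubic a b).IsRoot x) : rho a x ≠ x := fun hfix ↦
  (aeval_ne_zero_of_isCoprime (isCoprime_fixedCubic_orbitCubic hab) x).elim
    (· ((rho_eq_self_iff hx₁).mp hfix)) (· hx)

theorem rho_cycle_of_isRoot_orbitCubic (hab : a * (b ^ 2 + b + 1) = 1) (ha : a ≠ 1)
    (hx : (orbitCubic a b).IsRoot x) :
    (orbitCubic a b).IsRoot (rho a x) ∧ rho a x ≠ x ∧ rho a (rho a (rho a x)) = x := by
  have ha₀ : a ≠ 0 := left_ne_zero_of_mul_eq_one hab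
  have isRoot_nonic := isRoot_nonic_of_isRoot_orbitCubic hab hx
  have hx₁ := sq_add_one_ne_zero_of_isRoot_nonic ha₀ ha isRoot_nonic
  exact ⟨isRoot_orbitCubic_rho hab hx₁ hx, rho_ne_self_of_isRoot_orbitCubic hab hx₁ hx,
    rho_rho_rho_eq_self ha₀ ha isRoot_nonic⟩

theorem mul_eq_one_of_sq_add_eq_inv_add_one (ha : a ≠ 0) (hb : b ^ 2 + b = a⁻¹ + 1) :
    a * (b ^ 2 + b + 1) = 1 := by
  rw [hb, CharTwo.add_cancel_right, mul_inv_cancel₀ ha]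

theorem factorization_of_f_general [IsAlgClosed F] (ha : a ^ 2 ≠ a) (hb : b ^ 2 + b = a⁻¹ + 1) :
    nonic a = fixedCubic a * orbitCubic a b * orbitCubic a (b + 1) ∧
    {x : F | (nonic a).eval x = 0}.ncard = 9 ∧
    (∀ β : F, (fixedCubic a).eval β = 0 → rho a β = β) ∧
    (∀ g : F[X], (g = orbitCubic a b ∨ g = orbitCubic a (b + 1)) → ∀ β : F, g.eval β = 0 →
      g.eval (rho a β) = 0 ∧ rho a β ≠ β ∧ rho a (rho a (rho a β)) = β) := by
  have ha₀ : a ≠ 0 := by rintro rfl; simp at ha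
  have ha₁ : a ≠ 1 := by rintro rfl; simp at ha
  have hb' : (b + 1) ^ 2 + (b + 1) = a⁻¹ + 1 := by
    rw [← hb, CharTwo.add_sq, one_pow, add_add_add_comm, CharTwo.add_self_eq_zero, add_zero]
  have hab := mul_eq_one_of_sq_add_eq_inv_add_one ha₀ hb
  have hab' := mul_eq_one_of_sq_add_eq_inv_add_one ha₀ hb'
  refine ⟨nonic_eq_mul hab, ?_, fun β ↦ rho_eq_self_of_isRoot_fixedCubic ha₀, ?_⟩
  · exact (ncard_setOf_isRoot_eq_natDegree (separable_nonic ha₀)).trans (natDegree_nonic ha₁)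
  · rintro g (rfl | rfl) β hβ
    · exact rho_cycle_of_isRoot_orbitCubic hab ha₁ hβ
    · exact rho_cycle_of_isRoot_orbitCubic hab' ha₁ hβ

end Field

/-- Lemma 4.5: `f = f₀·f₁·f₂`, `f` has nine distinct roots in the algebraic closure,
`ρ` fixes each root of `f₀`, and `ρ` acts as a 3-cycle on the roots of `f₁` and `f₂`. -/
theorem factorization_of_f
    (m : ℕ) (hm : 0 < m) (q : ℕ) (hq : q = 2 ^ m)
    (a : K) (haq : a ^ q = a) (ha2 : a ^ 2 ≠ a)
    (htr : ∑ i ∈ Finset.range m, a⁻¹ ^ 2 ^ i = (m : K))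
    (b : K) (hbq : b ^ q = b) (hb : b ^ 2 + b = a⁻¹ + 1)
    (ρ : K → K) (hρ : ρ = fun x : K => a / (x ^ 2 + 1))
    (f f0 f1 f2 : Polynomial K)
    (hf : f = C (a ^ 2 + 1) * X ^ 9 + C a * X ^ 8 + C (a ^ 4 + a ^ 2 + 1) * X +
      C (a ^ 5 + a))
    (hf0 : f0 = X ^ 3 + X + C a)
    (hf1 : f1 = C (a * b ^ 2) * X ^ 3 + X ^ 2 + C (a * (b + 1) ^ 2) * X +
      C (a ^ 2 * b ^ 4))
    (hf2 : f2 = C (a * (b + 1) ^ 2) * X ^ 3 + X ^ 2 + C (a * b ^ 2) * X +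
      C (a ^ 2 * (b + 1) ^ 4)) :
    f = f0 * f1 * f2 ∧
    {x : K | Polynomial.eval x f = 0}.ncard = 9 ∧
    (∀ β : K, Polynomial.eval β f0 = 0 → ρ β = β) ∧
    (∀ g : Polynomial K, (g = f1 ∨ g = f2) → ∀ β : K, Polynomial.eval β g = 0 →
      Polynomial.eval (ρ β) g = 0 ∧ ρ β ≠ β ∧ ρ (ρ (ρ β)) = β) := by
  subst hρ hf hf0 hf1 hf2
  rw [← orbitCubic_add_one]
  exact factorization_of_f_general ha2 hb
end

section
/- For each k ∈ {1,2} and each irreducible degree-3 polynomial g(X) ∈ F_q[X] dividing X^(2q^k+1) + X + a, there is a unique i ∈ {1,2} such that g(X) is a nonzero constant multiple of f_i(X). Conversely, for each i ∈ {1,2}, if f_i(X) is irreducible over F_q, then f_i(X) divides X^(2q^k+1) + X + a for a unique k ∈ {1,2}. -/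
open Polynomial

/-!
Let `x` be a root of an irreducible cubic `g` over `F_q`, with conjugates `y = x ^ q` and
`z = x ^ q ^ 2`. Then `g` divides `X ^ (2 * q ^ k + 1) + X + a` for some `k ∈ {1, 2}` precisely
when `(x * y ^ 2 + x + a) * (x * z ^ 2 + x + a) = 0`. As `y + z` and `y * z` can be expressed
through `x` and the elementary symmetric functions `e₁, e₂, e₃` of `x, y, z`, this product is the
value at `x` of a polynomial of degree at most three over `F_q`. It vanishes exactly when that
polynomial is a multiple of `g`, which gives three relations between `a` and `e₁, e₂, e₃`. Their
solutions are `e₁ = 1 / (a * b ^ 2)`, `e₂ = (b + 1) ^ 2 / b ^ 2` and `e₃ = a * b ^ 2` for the two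
roots `b` of `b ^ 2 + b + 1 = 1 / a`, i.e. the cubics `f₁` and `f₂`. The product has at most one
zero factor because `y ≠ z`.
-/

theorem existsUnique_eq_or_eq_and_iff_xor {α : Type*} {i j : α} (hij : i ≠ j) {p : α → Prop} :
    (∃! k, (k = i ∨ k = j) ∧ p k) ↔ Xor (p i) (p j) := by
  constructor
  · rintro ⟨k, ⟨rfl | rfl, hk⟩, huniq⟩
    · exact .inl ⟨hk, fun hj => hij (huniq j ⟨.inr rfl, hj⟩).symm⟩
    · exact .inr ⟨hk, fun hi => hij (huniq i ⟨.inl rfl, hi⟩)⟩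
  · rintro (⟨hi, hj⟩ | ⟨hj, hi⟩)
    · exact ⟨i, ⟨.inl rfl, hi⟩, by rintro k ⟨rfl | rfl, hk⟩ <;> [rfl; exact absurd hk hj]⟩
    · exact ⟨j, ⟨.inr rfl, hj⟩, by rintro k ⟨rfl | rfl, hk⟩ <;> [exact absurd hk hi; rfl]⟩

theorem associated_iff_exists_eq_C_mul {K : Type*} [Field K] {f g : K[X]} :
    Associated g f ↔ ∃ u : K, u ≠ 0 ∧ g = C u * f := by
  constructor
  · intro hgf
    obtain ⟨v, rfl⟩ := hgf.symm
    obtain ⟨u, hu, huv⟩ := Polynomial.isUnit_iff.1 v.isUnit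
    exact ⟨u, hu.ne_zero, by rw [huv, mul_comm]⟩
  · rintro ⟨u, hu, rfl⟩
    exact associated_unit_mul_left f (C u) (isUnit_C.2 hu.isUnit)

theorem coeffs_eq_of_three_roots {K : Type*} [CommRing K] [IsDomain K] {c₀ c₁ c₂ c₃ x y z : K}
    (hxy : x ≠ y) (hxz : x ≠ z) (hyz : y ≠ z)
    (hx : c₃ * x ^ 3 + c₂ * x ^ 2 + c₁ * x + c₀ = 0)
    (hy : c₃ * y ^ 3 + c₂ * y ^ 2 + c₁ * y + c₀ = 0)
    (hz : c₃ * z ^ 3 + c₂ * z ^ 2 + c₁ * z + c₀ = 0) :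
    c₂ = -(c₃ * (x + y + z)) ∧ c₁ = c₃ * (x * y + y * z + z * x) ∧ c₀ = -(c₃ * (x * y * z)) := by
  have slope_xy : c₃ * (x ^ 2 + x * y + y ^ 2) + c₂ * (x + y) + c₁ = 0 :=
    mul_left_cancel₀ (sub_ne_zero.2 hxy) (by linear_combination hx - hy)
  have slope_xz : c₃ * (x ^ 2 + x * z + z ^ 2) + c₂ * (x + z) + c₁ = 0 :=
    mul_left_cancel₀ (sub_ne_zero.2 hxz) (by linear_combination hx - hz)
  have slope_xyz : c₃ * (x + y + z) + c₂ = 0 :=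
    mul_left_cancel₀ (sub_ne_zero.2 hyz) (by linear_combination slope_xy - slope_xz)
  refine ⟨by linear_combination slope_xyz, by linear_combination slope_xy - (x + y) * slope_xyz, ?_⟩
  linear_combination hx - x * slope_xy + x * y * slope_xyz

section Conjugates

variable {F A L : Type*} [Field F] [CommRing A] [Algebra F A] [Field L] [Algebra F L]
  {g : F[X]} {x : L}

theorem dvd_iff_aeval_eq_zero_of_irreducible [Nontrivial A] {x : A} (hg : Irreducible g)
    (hx : aeval x g = 0) {p : F[X]} : g ∣ p ↔ aeval x p = 0 := by
  have hunit : IsUnit (C g.leadingCoeff⁻¹) :=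
    isUnit_C.2 (inv_ne_zero (leadingCoeff_ne_zero.2 hg.ne_zero)).isUnit
  rw [← minpoly.dvd_iff, ← minpoly.eq_of_irreducible hg hx, hunit.mul_right_dvd]

variable [Finite F]

theorem aeval_pow_card_pow (p : F[X]) (x : A) (k : ℕ) :
    aeval (x ^ Nat.card F ^ k) p = aeval x p ^ Nat.card F ^ k := by
  have := Fintype.ofFinite F
  induction k with
  | zero => simp
  | succ k ih =>
    rw [pow_succ, pow_mul, ← expand_aeval, Nat.card_eq_fintype_card, FiniteField.expand_card,
      map_pow, ← Nat.card_eq_fintype_card, ih, pow_mul]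

theorem aeval_pow_card_pow_eq_zero {x : A} (hx : aeval x g = 0) (k : ℕ) :
    aeval (x ^ Nat.card F ^ k) g = 0 := by
  rw [aeval_pow_card_pow, hx, zero_pow (pow_ne_zero k Nat.card_pos.ne')]

variable (F) in
theorem pow_card_pow_injective (k : ℕ) : Function.Injective fun x : L => x ^ Nat.card F ^ k := by
  have := Fintype.ofFinite F
  have hcoe : ⇑(FiniteField.frobeniusAlgHom F L ^ k) = fun x => x ^ Nat.card F ^ k := by
    rw [AlgHom.coe_pow, FiniteField.coe_frobeniusAlgHom, pow_iterate, Nat.card_eq_fintype_card]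
  exact hcoe ▸ (FiniteField.frobeniusAlgHom F L ^ k).injective

theorem pow_card_pow_eq_self_iff (hg : Irreducible g) (hx : aeval x g = 0) {k : ℕ} :
    x ^ Nat.card F ^ k = x ↔ g.natDegree ∣ k := by
  rw [hg.natDegree_dvd_iff_dvd_X_pow_card_pow_sub_X, dvd_iff_aeval_eq_zero_of_irreducible hg hx]
  simp [sub_eq_zero]

theorem pow_card_pow_eq_pow_card_pow_iff (hg : Irreducible g) (hx : aeval x g = 0) {i j : ℕ} :
    x ^ Nat.card F ^ i = x ^ Nat.card F ^ j ↔ i ≡ j [MOD g.natDegree] := by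
  wlog hij : i ≤ j generalizing i j
  · rw [eq_comm, this (le_of_not_ge hij), Nat.ModEq.comm]
  obtain ⟨d, rfl⟩ := Nat.exists_eq_add_of_le hij
  rw [add_comm i d, pow_add, pow_mul, (pow_card_pow_injective F i).eq_iff, eq_comm,
    pow_card_pow_eq_self_iff hg hx, Nat.ModEq.comm, Nat.add_modEq_right_iff]

theorem conjugates_ne_of_natDegree_eq_three (hg : Irreducible g) (hd : g.natDegree = 3)
    (hx : aeval x g = 0) {k₁ k₂ : ℕ} (hk₁ : k₁ ≡ 1 [MOD 3]) (hk₂ : k₂ ≡ 2 [MOD 3]) :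
    x ≠ x ^ Nat.card F ^ k₁ ∧ x ≠ x ^ Nat.card F ^ k₂ ∧
      x ^ Nat.card F ^ k₁ ≠ x ^ Nat.card F ^ k₂ := by
  rw [ne_comm, ne_comm (a := x), Ne, Ne, Ne, pow_card_pow_eq_self_iff hg hx,
    pow_card_pow_eq_self_iff hg hx, pow_card_pow_eq_pow_card_pow_iff hg hx, hd]
  unfold Nat.ModEq at *
  lia

end Conjugates

/-- The value at `x` of the trinomial `X ^ (2 * n + 1) + X + a` when `y` is written for `x ^ n`.
For `n = q ^ k` this turns the trinomial into a form of low degree in conjugate elements. -/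
def twistedTrinomial {R : Type*} [Semiring R] (a x y : R) : R :=
  x * y ^ 2 + x + a

theorem aeval_trinomial {R A : Type*} [CommSemiring R] [CommSemiring A] [Algebra R A]
    (a : R) (x : A) (n : ℕ) :
    aeval x (X ^ (2 * n + 1) + X + C a) = twistedTrinomial (algebraMap R A a) x (x ^ n) := by
  simp only [map_add, map_pow, aeval_X, aeval_C, twistedTrinomial]
  ring

/-- `cubicFactor a b (b + 1)` and `cubicFactor a (b + 1) b` are the cubics `f₁` and `f₂`. Keeping
the two roots `b`, `c = b + 1` of `T ^ 2 + T = a⁻¹ + 1` as separate arguments makes the exchange of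
`f₁` and `f₂` the exchange of `b` and `c`, and the equation of the roots `a * (b * c + 1) = 1`. -/
noncomputable def cubicFactor {R : Type*} [Semiring R] (a b c : R) : R[X] :=
  C (a * b ^ 2) * X ^ 3 + X ^ 2 + C (a * c ^ 2) * X + C (a ^ 2 * b ^ 4)

theorem eval_cubicFactor {R : Type*} [CommSemiring R] (a b c x : R) :
    (cubicFactor a b c).eval x =
      a * b ^ 2 * x ^ 3 + 1 * x ^ 2 + a * c ^ 2 * x + a ^ 2 * b ^ 4 := by
  simp [cubicFactor]

theorem aeval_cubicFactor {R A : Type*} [CommSemiring R] [CommSemiring A] [Algebra R A]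
    (a b c : R) (x : A) :
    aeval x (cubicFactor a b c) =
      (cubicFactor (algebraMap R A a) (algebraMap R A b) (algebraMap R A c)).eval x := by
  simp [cubicFactor]

theorem coeff_two_cubicFactor {R : Type*} [Semiring R] (a b c : R) :
    (cubicFactor a b c).coeff 2 = 1 := by
  simp only [cubicFactor, coeff_add, coeff_C_mul, coeff_X_pow, coeff_X, coeff_C]
  norm_num

theorem coeff_three_cubicFactor {R : Type*} [Semiring R] (a b c : R) :
    (cubicFactor a b c).coeff 3 = a * b ^ 2 := by
  simp only [cubicFactor, coeff_add, coeff_C_mul, coeff_X_pow, coeff_X, coeff_C]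
  norm_num

theorem natDegree_cubicFactor_le {R : Type*} [Semiring R] (a b c : R) :
    (cubicFactor a b c).natDegree ≤ 3 := by
  unfold cubicFactor
  compute_degree

theorem natDegree_cubicFactor {R : Type*} [Semiring R] {a b c : R} (hab : a * b ^ 2 ≠ 0) :
    (cubicFactor a b c).natDegree = 3 :=
  natDegree_eq_of_le_of_coeff_ne_zero (natDegree_cubicFactor_le a b c)
    (by rwa [coeff_three_cubicFactor])

theorem cubicFactor_ne_zero {R : Type*} [Semiring R] [Nontrivial R] (a b c : R) :
    cubicFactor a b c ≠ 0 := fun h =>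
  one_ne_zero (α := R) (by rw [← coeff_two_cubicFactor a b c, h, coeff_zero])

theorem ne_zero_of_irreducible_cubicFactor {R : Type*} [CommRing R] [IsDomain R] {a b c : R}
    (h : Irreducible (cubicFactor a b c)) : b ≠ 0 := by
  rintro rfl
  have factored : cubicFactor a 0 c = X * (X + C (a * c ^ 2)) := by
    simp only [cubicFactor, map_mul, map_pow, map_zero]
    ring
  exact (h.isUnit_or_isUnit factored).elim not_isUnit_X (not_isUnit_X_add_C _)

theorem not_associated_cubicFactor_swap {F : Type*} [Field F] [CharP F 2] {a b c : F}
    (hbc : b + c = 1) (ha : a ≠ 0) :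
    ¬Associated (cubicFactor a b c) (cubicFactor a c b) := by
  rw [associated_iff_exists_eq_C_mul]
  rintro ⟨u, -, h⟩
  have hu : u = 1 := by
    simpa [coeff_two_cubicFactor] using (congrArg (coeff · 2) h).symm
  have hsq : b ^ 2 = c ^ 2 := by
    simpa [hu, coeff_three_cubicFactor, ha] using congrArg (coeff · 3) h
  exact one_ne_zero (hbc ▸ CharTwo.add_eq_zero.2 (CharTwo.sq_injective hsq))

/-- In characteristic two, the conditions on `a` and on the elementary symmetric functions
`e₁, e₂, e₃` of `x, y, z` under which
`twistedTrinomial a x y * twistedTrinomial a x z` and its cyclic analogues vanish, solved for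
`e₂` and `e₃`. -/
structure TrinomialRelations {R : Type*} [Semiring R] (a e₁ e₂ e₃ : R) : Prop where
  e₂_eq : e₂ = a * e₁ + 1
  e₃_eq : e₃ = a ^ 2 * e₁ + a + e₁
  e₁_sq_eq : e₁ ^ 2 = (a * e₁) ^ 2 + a * e₁ + 1

theorem twistedTrinomial_mul_twistedTrinomial {R : Type*} [CommRing R] [CharP R 2] (a x y z : R) :
    twistedTrinomial a x y * twistedTrinomial a x z =
      (a + (x + y + z)) * x ^ 3 + ((x + y + z) ^ 2 + (x * y + y * z + z * x) + 1) * x ^ 2 +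
        (a * (x + y + z) ^ 2 + x * y * z) * x + (a ^ 2 + (x * y * z) ^ 2) := by
  unfold twistedTrinomial
  grind

section TrinomialRelations

variable {R : Type*} [CommRing R] [CharP R 2] {a b c x y z e₁ e₂ e₃ : R}

theorem TrinomialRelations.twistedTrinomial_mul_eq_zero
    (h : TrinomialRelations a (x + y + z) (x * y + y * z + z * x) (x * y * z)) :
    twistedTrinomial a x y * twistedTrinomial a x z = 0 := by
  have cubic_at_x : x ^ 3 = (x + y + z) * x ^ 2 - (x * y + y * z + z * x) * x + x * y * z := by ring
  obtain ⟨he₂, he₃, he₁⟩ := h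
  rw [twistedTrinomial_mul_twistedTrinomial]
  generalize x + y + z = e₁, x * y + y * z + z * x = e₂, x * y * z = e₃ at *
  grind

theorem trinomialRelations_iff_of_mul_sq_mul_eq_one (hbc : b + c = 1) (ha : a * (b * c + 1) = 1)
    (he₁ : a * b ^ 2 * e₁ = 1) :
    TrinomialRelations a e₁ e₂ e₃ ↔
      a * b ^ 2 * e₂ = a * c ^ 2 ∧ a * b ^ 2 * e₃ = a ^ 2 * b ^ 4 := by
  have hab : IsUnit (a * b ^ 2) := .of_mul_eq_one _ he₁
  constructor
  · rintro ⟨he₂, he₃, -⟩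
    constructor <;> grind
  · rintro ⟨he₂, he₃⟩
    refine ⟨hab.mul_left_cancel ?_, hab.mul_left_cancel ?_,
      (hab.pow 2).mul_left_cancel ?_⟩ <;> grind

theorem TrinomialRelations.eval_cubicFactor_eq_zero
    (h : TrinomialRelations a (x + y + z) (x * y + y * z + z * x) (x * y * z))
    (hbc : b + c = 1) (ha : a * (b * c + 1) = 1) (he₁ : a * b ^ 2 * (x + y + z) = 1) :
    (cubicFactor a b c).eval x = 0 := by
  obtain ⟨he₂, he₃⟩ := (trinomialRelations_iff_of_mul_sq_mul_eq_one hbc ha he₁).1 h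
  rw [eval_cubicFactor, ← he₁, ← he₂, ← he₃]
  linear_combination a * b ^ 2 * x *
    ((x ^ 2 + x * y + x * z + y * z) * CharTwo.two_eq_zero (R := R))

variable [IsDomain R]

theorem trinomialRelations_of_coeffs_proportional (ha : a ≠ 0)
    (h₂ : e₁ ^ 2 + e₂ + 1 = (a + e₁) * e₁) (h₁ : a * e₁ ^ 2 + e₃ = (a + e₁) * e₂)
    (h₀ : a ^ 2 + e₃ ^ 2 = (a + e₁) * e₃) : TrinomialRelations a e₁ e₂ e₃ := by
  have two_eq_zero : (2 : R) = 0 := CharTwo.two_eq_zero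
  have he₂ : e₂ = a * e₁ + 1 := by linear_combination h₂ - two_eq_zero
  have he₃ : e₃ = a ^ 2 * e₁ + a + e₁ := by linear_combination h₁ + (a + e₁) * he₂
  exact ⟨he₂, he₃, mul_left_cancel₀ (pow_ne_zero 2 ha) (by grind)⟩

theorem trinomialRelations_of_twistedTrinomial_mul_eq_zero (ha : a ≠ 0)
    (hxy : x ≠ y) (hxz : x ≠ z) (hyz : y ≠ z)
    (hx : twistedTrinomial a x y * twistedTrinomial a x z = 0)
    (hy : twistedTrinomial a y z * twistedTrinomial a y x = 0)
    (hz : twistedTrinomial a z x * twistedTrinomial a z y = 0) :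
    TrinomialRelations a (x + y + z) (x * y + y * z + z * x) (x * y * z) := by
  rw [twistedTrinomial_mul_twistedTrinomial] at hx hy hz
  obtain ⟨h₂, h₁, h₀⟩ := coeffs_eq_of_three_roots hxy hxz hyz hx
    (by linear_combination hy) (by linear_combination hz)
  rw [CharTwo.neg_eq] at h₂ h₀
  exact trinomialRelations_of_coeffs_proportional ha h₂ h₁ h₀

theorem TrinomialRelations.mul_sq_mul_eq_one_or (h : TrinomialRelations a e₁ e₂ e₃)
    (hbc : b + c = 1) (ha : a * (b * c + 1) = 1) : a * b ^ 2 * e₁ = 1 ∨ a * c ^ 2 * e₁ = 1 := by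
  have factored : (a * b ^ 2 * e₁ - 1) * (a * c ^ 2 * e₁ - 1) = 0 := by
    grind [h.e₁_sq_eq]
  simpa only [mul_eq_zero, sub_eq_zero] using factored

theorem trinomialRelations_of_cubicFactor_roots (hbc : b + c = 1) (ha : a * (b * c + 1) = 1)
    (hxy : x ≠ y) (hxz : x ≠ z) (hyz : y ≠ z) (hx : (cubicFactor a b c).eval x = 0)
    (hy : (cubicFactor a b c).eval y = 0) (hz : (cubicFactor a b c).eval z = 0) :
    TrinomialRelations a (x + y + z) (x * y + y * z + z * x) (x * y * z) := by
  rw [eval_cubicFactor] at hx hy hz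
  obtain ⟨he₁, he₂, he₃⟩ := coeffs_eq_of_three_roots hxy hxz hyz hx hy hz
  rw [CharTwo.neg_eq] at he₁ he₃
  exact (trinomialRelations_iff_of_mul_sq_mul_eq_one hbc ha he₁.symm).2 ⟨he₂.symm, he₃.symm⟩

theorem eq_of_twistedTrinomial_eq_zero (ha : a ≠ 0) (hy : twistedTrinomial a x y = 0)
    (hz : twistedTrinomial a x z = 0) : y = z := by
  unfold twistedTrinomial at hy hz
  have hx : x ≠ 0 := by
    rintro rfl
    exact ha (by simpa using hy)
  exact CharTwo.sq_injective (mul_left_cancel₀ hx (by linear_combination hy - hz))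

end TrinomialRelations

section FiniteField

variable {F L : Type*} [Field F] [Field L] [Algebra F L] {a b c : F} {g : F[X]} {x : L}

theorem dvd_trinomial_iff (hg : Irreducible g) (hx : aeval x g = 0) {n : ℕ} :
    g ∣ X ^ (2 * n + 1) + X + C a ↔ twistedTrinomial (algebraMap F L a) x (x ^ n) = 0 := by
  rw [dvd_iff_aeval_eq_zero_of_irreducible hg hx, aeval_trinomial]

variable [Finite F] [CharP F 2] {k₁ k₂ : ℕ}

theorem trinomialRelations_of_dvd_trinomial (hg : Irreducible g) (hd : g.natDegree = 3)
    (hx : aeval x g = 0) (ha : a ≠ 0) (hk₁ : k₁ ≡ 1 [MOD 3]) (hk₂ : k₂ ≡ 2 [MOD 3])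
    (hdvd : g ∣ X ^ (2 * Nat.card F ^ k₁ + 1) + X + C a ∨
      g ∣ X ^ (2 * Nat.card F ^ k₂ + 1) + X + C a) :
    let y := x ^ Nat.card F ^ k₁
    let z := x ^ Nat.card F ^ k₂
    TrinomialRelations (algebraMap F L a) (x + y + z) (x * y + y * z + z * x) (x * y * z) := by
  intro y z
  have := charP_of_injective_algebraMap' F (A := L) 2
  have conj_conj {i j l : ℕ} (h : i + j ≡ l [MOD 3]) :
      (x ^ Nat.card F ^ i) ^ Nat.card F ^ j = x ^ Nat.card F ^ l := by
    rwa [← pow_mul, ← pow_add, pow_card_pow_eq_pow_card_pow_iff hg hx, hd]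
  have hyz : y ^ Nat.card F ^ k₁ = z := conj_conj ((hk₁.add hk₁).trans hk₂.symm)
  have hyx : y ^ Nat.card F ^ k₂ = x := by simpa using conj_conj (l := 0) (hk₁.add hk₂)
  have hzx : z ^ Nat.card F ^ k₁ = x := by simpa using conj_conj (l := 0) (hk₂.add hk₁)
  have hzy : z ^ Nat.card F ^ k₂ = y := conj_conj ((hk₂.add hk₂).trans hk₁.symm)
  have product_eq_zero {w : L} (hw : aeval w g = 0) :
      twistedTrinomial (algebraMap F L a) w (w ^ Nat.card F ^ k₁) *
        twistedTrinomial (algebraMap F L a) w (w ^ Nat.card F ^ k₂) = 0 := by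
    rwa [mul_eq_zero, ← dvd_trinomial_iff hg hw, ← dvd_trinomial_iff hg hw]
  obtain ⟨hx_ne_y, hx_ne_z, hy_ne_z⟩ := conjugates_ne_of_natDegree_eq_three hg hd hx hk₁ hk₂
  refine trinomialRelations_of_twistedTrinomial_mul_eq_zero (by simpa) hx_ne_y hx_ne_z hy_ne_z
    (product_eq_zero hx) ?_ ?_
  · have hy : aeval y g = 0 := aeval_pow_card_pow_eq_zero hx k₁
    simpa only [hyz, hyx] using product_eq_zero hy
  · have hz : aeval z g = 0 := aeval_pow_card_pow_eq_zero hx k₂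
    simpa only [hzx, hzy] using product_eq_zero hz

theorem aeval_cubicFactor_eq_zero_or_of_dvd_trinomial (hbc : b + c = 1) (ha : a * (b * c + 1) = 1)
    (hg : Irreducible g) (hd : g.natDegree = 3) (hx : aeval x g = 0)
    (hk₁ : k₁ ≡ 1 [MOD 3]) (hk₂ : k₂ ≡ 2 [MOD 3])
    (hdvd : g ∣ X ^ (2 * Nat.card F ^ k₁ + 1) + X + C a ∨
      g ∣ X ^ (2 * Nat.card F ^ k₂ + 1) + X + C a) :
    aeval x (cubicFactor a b c) = 0 ∨ aeval x (cubicFactor a c b) = 0 := by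
  have := charP_of_injective_algebraMap' F (A := L) 2
  have hbcL : algebraMap F L b + algebraMap F L c = 1 := by rw [← map_add, hbc, map_one]
  have haL : algebraMap F L a * (algebraMap F L b * algebraMap F L c + 1) = 1 := by
    simpa using congrArg (algebraMap F L) ha
  have relations := trinomialRelations_of_dvd_trinomial hg hd hx (left_ne_zero_of_mul_eq_one ha)
    hk₁ hk₂ hdvd
  rw [aeval_cubicFactor, aeval_cubicFactor]
  exact (relations.mul_sq_mul_eq_one_or hbcL haL).imp
    (relations.eval_cubicFactor_eq_zero hbcL haL)
    (relations.eval_cubicFactor_eq_zero (by rwa [add_comm]) (by rwa [mul_comm (algebraMap F L c)]))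

theorem associated_cubicFactor_or_of_dvd_trinomial (hbc : b + c = 1) (ha : a * (b * c + 1) = 1)
    (hg : Irreducible g) (hd : g.natDegree = 3) (hk₁ : k₁ ≡ 1 [MOD 3]) (hk₂ : k₂ ≡ 2 [MOD 3])
    (hdvd : g ∣ X ^ (2 * Nat.card F ^ k₁ + 1) + X + C a ∨
      g ∣ X ^ (2 * Nat.card F ^ k₂ + 1) + X + C a) :
    Associated g (cubicFactor a b c) ∨ Associated g (cubicFactor a c b) := by
  have := Fact.mk hg
  have hroot : aeval (AdjoinRoot.root g) g = 0 := AdjoinRoot.aeval_eq g ▸ AdjoinRoot.mk_self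
  have associated_of_root {b c : F} (h : aeval (AdjoinRoot.root g) (cubicFactor a b c) = 0) :
      Associated g (cubicFactor a b c) :=
    associated_of_dvd_of_natDegree_le ((dvd_iff_aeval_eq_zero_of_irreducible hg hroot).2 h)
      (cubicFactor_ne_zero a b c) (hd ▸ natDegree_cubicFactor_le a b c)
  exact (aeval_cubicFactor_eq_zero_or_of_dvd_trinomial hbc ha hg hd hroot hk₁ hk₂ hdvd).imp
    associated_of_root associated_of_root

theorem xor_associated_cubicFactor_of_dvd_trinomial (hbc : b + c = 1) (ha : a * (b * c + 1) = 1)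
    (hg : Irreducible g) (hd : g.natDegree = 3) (hk₁ : k₁ ≡ 1 [MOD 3]) (hk₂ : k₂ ≡ 2 [MOD 3])
    (hdvd : g ∣ X ^ (2 * Nat.card F ^ k₁ + 1) + X + C a ∨
      g ∣ X ^ (2 * Nat.card F ^ k₂ + 1) + X + C a) :
    Xor (Associated g (cubicFactor a b c)) (Associated g (cubicFactor a c b)) := by
  rw [xor_iff_or_and_not_and]
  exact ⟨associated_cubicFactor_or_of_dvd_trinomial hbc ha hg hd hk₁ hk₂ hdvd, fun h =>
    not_associated_cubicFactor_swap hbc (left_ne_zero_of_mul_eq_one ha) (h.1.symm.trans h.2)⟩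

theorem xor_cubicFactor_dvd_trinomial (hbc : b + c = 1) (ha : a * (b * c + 1) = 1)
    (hirr : Irreducible (cubicFactor a b c)) (hk₁ : k₁ ≡ 1 [MOD 3]) (hk₂ : k₂ ≡ 2 [MOD 3]) :
    Xor (cubicFactor a b c ∣ X ^ (2 * Nat.card F ^ k₁ + 1) + X + C a)
      (cubicFactor a b c ∣ X ^ (2 * Nat.card F ^ k₂ + 1) + X + C a) := by
  have := Fact.mk hirr
  let φ := algebraMap F (AdjoinRoot (cubicFactor a b c))
  have := charP_of_injective_algebraMap' F (A := AdjoinRoot (cubicFactor a b c)) 2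
  have ha0 : a ≠ 0 := left_ne_zero_of_mul_eq_one ha
  have hb : b ≠ 0 := ne_zero_of_irreducible_cubicFactor hirr
  have hd : (cubicFactor a b c).natDegree = 3 :=
    natDegree_cubicFactor (mul_ne_zero ha0 (pow_ne_zero 2 hb))
  have hx : aeval (AdjoinRoot.root (cubicFactor a b c)) (cubicFactor a b c) = 0 :=
    AdjoinRoot.aeval_eq (cubicFactor a b c) ▸ AdjoinRoot.mk_self
  have hbcL : φ b + φ c = 1 := by rw [← map_add, hbc, map_one]
  have haL : φ a * (φ b * φ c + 1) = 1 := by simpa using congrArg φ ha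
  obtain ⟨hx_ne_y, hx_ne_z, hy_ne_z⟩ := conjugates_ne_of_natDegree_eq_three hirr hd hx hk₁ hk₂
  have hy := aeval_pow_card_pow_eq_zero hx k₁
  have hz := aeval_pow_card_pow_eq_zero hx k₂
  rw [dvd_trinomial_iff hirr hx, dvd_trinomial_iff hirr hx, xor_iff_or_and_not_and, ← mul_eq_zero]
  rw [aeval_cubicFactor] at hx hy hz
  exact ⟨(trinomialRelations_of_cubicFactor_roots hbcL haL hx_ne_y hx_ne_z hy_ne_z
    hx hy hz).twistedTrinomial_mul_eq_zero, fun h =>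
      hy_ne_z (eq_of_twistedTrinomial_eq_zero (by simpa) h.1 h.2)⟩

theorem irreducible_cubic_factors_general (ha : a ≠ 0) (hb : b ^ 2 + b = a⁻¹ + 1)
    (hk₁ : k₁ ≡ 1 [MOD 3]) (hk₂ : k₂ ≡ 2 [MOD 3]) :
    (∀ k : ℕ, (k = k₁ ∨ k = k₂) → ∀ g : F[X], Irreducible g → g.degree = 3 →
      g ∣ X ^ (2 * Nat.card F ^ k + 1) + X + C a →
      ∃! i : ℕ, (i = 1 ∨ i = 2) ∧ ∃ u : F, u ≠ 0 ∧
        g = C u * (if i = 1 then cubicFactor a b (b + 1) else cubicFactor a (b + 1) b)) ∧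
    (∀ i : ℕ, (i = 1 ∨ i = 2) →
      Irreducible (if i = 1 then cubicFactor a b (b + 1) else cubicFactor a (b + 1) b) →
      ∃! k : ℕ, (k = k₁ ∨ k = k₂) ∧
        (if i = 1 then cubicFactor a b (b + 1) else cubicFactor a (b + 1) b) ∣
          X ^ (2 * Nat.card F ^ k + 1) + X + C a) := by
  have hbc : b + (b + 1) = 1 := by rw [← add_assoc, CharTwo.add_self_eq_zero, zero_add]
  have hab : a * (b * (b + 1) + 1) = 1 := by
    rw [mul_add_one b, ← sq, hb, add_assoc, CharTwo.add_self_eq_zero, add_zero, mul_inv_cancel₀ ha]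
  have hk : k₁ ≠ k₂ := by rintro rfl; exact absurd (hk₁.symm.trans hk₂) (by decide)
  simp only [← associated_iff_exists_eq_C_mul, existsUnique_eq_or_eq_and_iff_xor hk,
    existsUnique_eq_or_eq_and_iff_xor (show 1 ≠ 2 by decide)]
  refine ⟨fun k hk' g hg hd hdvd => ?_, ?_⟩
  · exact xor_associated_cubicFactor_of_dvd_trinomial hbc hab hg
      (natDegree_eq_of_degree_eq_some hd) hk₁ hk₂ (by rcases hk' with rfl | rfl <;> simp [hdvd])
  · rintro i (rfl | rfl) hirr
    · exact xor_cubicFactor_dvd_trinomial hbc hab hirr hk₁ hk₂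
    · exact xor_cubicFactor_dvd_trinomial (by rwa [add_comm]) (by rwa [mul_comm (b + 1)]) hirr hk₁
        hk₂

end FiniteField

/-- Proposition 4.1: for `k ∈ {1,2}`, any irreducible cubic `g ∈ F_q[X]` dividing
`H_k(X) = X^(2q^k+1) + X + a` is a nonzero constant multiple of exactly one of `f₁, f₂`;
conversely, if `f_i` is irreducible over `F_q` then `f_i` divides `H_k` for a unique
`k ∈ {1,2}`. -/
theorem irreducible_cubic_factors
    (m : ℕ) (hm : 0 < m) (q : ℕ) (hq : q = 2 ^ m)
    (a b : GaloisField 2 m)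
    (ha2 : a ^ 2 ≠ a)
    (htr : ∑ i ∈ Finset.range m, a⁻¹ ^ 2 ^ i = (m : GaloisField 2 m))
    (hb : b ^ 2 + b = a⁻¹ + 1)
    (f1 f2 : Polynomial (GaloisField 2 m))
    (hf1 : f1 = C (a * b ^ 2) * X ^ 3 + X ^ 2 + C (a * (b + 1) ^ 2) * X +
      C (a ^ 2 * b ^ 4))
    (hf2 : f2 = C (a * (b + 1) ^ 2) * X ^ 3 + X ^ 2 + C (a * b ^ 2) * X +
      C (a ^ 2 * (b + 1) ^ 4)) :
    (∀ k : ℕ, (k = 1 ∨ k = 2) → ∀ g : Polynomial (GaloisField 2 m),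
      Irreducible g → g.degree = 3 →
      g ∣ (X ^ (2 * q ^ k + 1) + X + C a) →
      ∃! i : ℕ, (i = 1 ∨ i = 2) ∧
        ∃ u : GaloisField 2 m, u ≠ 0 ∧ g = C u * (if i = 1 then f1 else f2)) ∧
    (∀ i : ℕ, (i = 1 ∨ i = 2) → Irreducible (if i = 1 then f1 else f2) →
      ∃! k : ℕ, (k = 1 ∨ k = 2) ∧
        (if i = 1 then f1 else f2) ∣ (X ^ (2 * q ^ k + 1) + X + C a)) := by
  subst hq hf1 hf2
  rw [← GaloisField.card 2 m hm.ne']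
  have ha : a ≠ 0 := by rintro rfl; simp at ha2
  exact irreducible_cubic_factors_general ha hb (k₁ := 1) (k₂ := 2) rfl rfl
end

section
/- For each i ∈ {0,1,2}: the polynomial f_i(X) has three distinct roots in F_q if ω^i·c is a cube in F_{q²}, and f_i(X) is irreducible in F_q[X] otherwise. -/
open Polynomial

/-!
Let `σ` be the Frobenius `x ↦ x ^ q`. It maps the primitive cube root of unity `ω` to `ω` or
`ω⁻¹`; let `τ` be `σ` in the first case and `x ↦ (σ x)⁻¹` in the second, so that `τ` is
multiplicative, `τ ω = ω` and `τ ∘ τ = σ ∘ σ`. The involution `x ↦ (c x - 1) / (x - c)` exchanges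
the points fixed by `σ` with those fixed by `τ` as soon as `τ c = c`. Since
`c = ω / ((ω b - 1) / (b - ω))`, this holds for the `c` of the theorem. Up to a nonzero factor
`f_i (x)` is `(c x - 1) ^ 3 - ω ^ i c (x - c) ^ 3`, so the roots of `f_i` in `F_q` correspond to the
cube roots of `ω ^ i c` that are fixed by `τ`. A cube root `y` in `F_{q²}` is fixed: `τ y / y` is a
cube root of unity, hence fixed by `τ`, but `τ` also inverts it, so it is `1`. The three cube roots
differ by powers of `ω`, so either all of them are fixed or none is.
-/

section Field

variable {L : Type*} [Field L]

/-- The Möbius transformation of trace zero attached to `c`, an involution away from its pole `c`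
when `c ^ 2 ≠ 1`. At the pole it takes the junk value `0`. -/
def moebius (c x : L) : L := (c * x - 1) / (x - c)

theorem moebius_ne {c x : L} (hc : c ^ 2 ≠ 1) (hx : x ≠ c) : moebius c x ≠ c := by
  intro h
  rw [moebius, div_eq_iff (sub_ne_zero.2 hx)] at h
  exact hc (by linear_combination h)

theorem moebius_moebius {c x : L} (hc : c ^ 2 ≠ 1) (hx : x ≠ c) :
    moebius c (moebius c x) = x := by
  have hpole : moebius c x - c ≠ 0 := sub_ne_zero.2 (moebius_ne hc hx)
  have hx' : x - c ≠ 0 := sub_ne_zero.2 hx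
  rw [moebius, div_eq_iff hpole, moebius]
  field_simp
  ring

theorem moebius_pow_eq_iff {c x : L} (hx : x ≠ c) {n : ℕ} {e : L} :
    moebius c x ^ n = e ↔ (c * x - 1) ^ n - e * (x - c) ^ n = 0 := by
  rw [moebius, div_pow, div_eq_iff (pow_ne_zero n (sub_ne_zero.2 hx)), sub_eq_zero]

/-- `τ` is the ring endomorphism `σ` itself or its pointwise inverse `x ↦ (σ x)⁻¹`. In the second
case `τ` is only multiplicative, and its nonzero fixed points are the elements inverted by `σ`. -/
def IsTwist (σ : L →+* L) (τ : L →*₀ L) : Prop :=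
  (∀ x, τ x = σ x) ∨ ∀ x, τ x = (σ x)⁻¹

theorem sq_add_self_add_one_of_isPrimitiveRoot_three {ω : L} (hω : IsPrimitiveRoot ω 3) :
    ω ^ 2 + ω + 1 = 0 := by
  have h := hω.geom_sum_eq_zero (by norm_num)
  simp only [Finset.sum_range_succ, Finset.sum_range_zero] at h
  linear_combination h

theorem isPrimitiveRoot_three_of_pow_four_eq {ω : L} (hω4 : ω ^ 4 = ω) (hω2 : ω ^ 2 ≠ ω) :
    IsPrimitiveRoot ω 3 := by
  have hω0 : ω ≠ 0 := by rintro rfl; simp at hω2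
  have hω1 : ω ≠ 1 := by rintro rfl; simp at hω2
  have hω3 : ω ^ 3 = 1 := mul_left_cancel₀ hω0 (by linear_combination hω4)
  exact orderOf_eq_prime hω3 hω1 ▸ IsPrimitiveRoot.orderOf ω

theorem exists_isTwist_apply_eq (σ : L →+* L) {ω : L} (hω : IsPrimitiveRoot ω 3) :
    ∃ τ : L →*₀ L, IsTwist σ τ ∧ τ ω = ω := by
  have hsum := sq_add_self_add_one_of_isPrimitiveRoot_three hω
  have hsum' := congrArg σ hsum
  simp only [map_add, map_pow, map_one, map_zero] at hsum'
  have hprod : (σ ω - ω) * (σ ω - ω ^ 2) = 0 := by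
    linear_combination hsum' + (ω - 1 - σ ω) * hsum
  rcases mul_eq_zero.1 hprod with h | h
  · exact ⟨σ.toMonoidWithZeroHom, .inl fun _ ↦ rfl, sub_eq_zero.1 h⟩
  · refine ⟨invMonoidWithZeroHom.comp σ.toMonoidWithZeroHom, .inr fun _ ↦ rfl, ?_⟩
    refine inv_eq_of_mul_eq_one_left ?_
    change ω * σ ω = 1
    rw [sub_eq_zero.1 h, ← pow_succ', hω.pow_eq_one]

namespace IsTwist

variable {σ : L →+* L} {τ : L →*₀ L}

theorem apply_apply (hτ : IsTwist σ τ) (x : L) : τ (τ x) = σ (σ x) := by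
  rcases hτ with h | h <;> simp [h]

theorem apply_moebius (hτ : IsTwist σ τ) {c x : L} (hc : τ c = c) (hc0 : c ≠ 0)
    (hx : σ x = x) : τ (moebius c x) = moebius c x := by
  rcases hτ with h | h <;> rw [h] at hc ⊢
  · simp [moebius, hc, hx]
  · have hσ : σ (moebius c x) = (c⁻¹ * x - 1) / (x - c⁻¹) := by
      simp [moebius, hx, inv_eq_iff_eq_inv.1 hc]
    rw [hσ, moebius, inv_div, ← mul_div_mul_left (x - c⁻¹) _ hc0]
    congr 1 <;> field_simp

theorem map_moebius (hτ : IsTwist σ τ) {c z : L} (hc : τ c = c) (hc0 : c ≠ 0)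
    (hz : τ z = z) (hz0 : z ≠ 0) : σ (moebius c z) = moebius c z := by
  rcases hτ with h | h <;> rw [h] at hc hz
  · simp [moebius, hc, hz]
  · have hσ : σ (moebius c z) = (c⁻¹ * z⁻¹ - 1) / (z⁻¹ - c⁻¹) := by
      simp [moebius, inv_eq_iff_eq_inv.1 hc, inv_eq_iff_eq_inv.1 hz]
    rw [hσ, moebius, ← mul_div_mul_left _ (z⁻¹ - c⁻¹) (mul_ne_zero hc0 hz0),
      ← neg_div_neg_eq (c * z - 1)]
    congr 1 <;> field_simp <;> ring

end IsTwist

theorem apply_eq_self_of_apply_pow_eq {τ : L →*₀ L} {n : ℕ} (hn : Odd n) {ζ y : L}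
    (hζ : IsPrimitiveRoot ζ n) (hτζ : τ ζ = ζ) (hy : τ (y ^ n) = y ^ n) (hyy : τ (τ y) = y) :
    τ y = y := by
  have : NeZero n := ⟨hn.pos.ne'⟩
  rcases eq_or_ne y 0 with rfl | hy0
  · exact map_zero τ
  set u := τ y / y with hu
  have hu0 : u ≠ 0 := div_ne_zero ((map_ne_zero τ).2 hy0) hy0
  have hun : u ^ n = 1 := by rw [hu, div_pow, ← map_pow, hy, div_self (pow_ne_zero n hy0)]
  have hfixed : τ u = u := by
    obtain ⟨i, -, hi⟩ := hζ.eq_pow_of_pow_eq_one hun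
    rw [← hi, map_pow, hτζ]
  have hinv : τ u = u⁻¹ := by rw [hu, map_div₀, hyy, inv_div]
  have hsq : u ^ 2 = 1 := by
    calc u ^ 2 = u * τ u := by rw [hfixed, sq]
      _ = 1 := by rw [hinv, mul_inv_cancel₀ hu0]
  have hone : u = 1 := by
    obtain ⟨k, rfl⟩ := hn
    rwa [pow_succ, pow_mul, hsq, one_pow, one_mul] at hun
  exact (div_eq_one_iff_eq hy0).1 hone

theorem ncard_setOf_pow_eq {ζ : L} {n : ℕ} [NeZero n] (hζ : IsPrimitiveRoot ζ n) {y : L}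
    (hy : y ≠ 0) : {z : L | z ^ n = y ^ n}.ncard = n := by
  classical
  have hset : {z : L | z ^ n = y ^ n} = (nthRoots n (y ^ n)).toFinset := by
    ext z
    simp [mem_nthRoots (NeZero.pos n)]
  rw [hset, Set.ncard_coe_finset,
    Multiset.toFinset_card_of_nodup (hζ.nthRoots_nodup (pow_ne_zero n hy)),
    hζ.card_nthRoots, if_pos ⟨y, rfl⟩]

section CharTwo

variable [CharP L 2] {α β ω : L}

/-- The element `c` of the theorem, as a function of the image `β` of `b` in the extension. -/
def cubeParam (β ω : L) : L := (β + ω) / (β + ω ^ 2)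

theorem cubeParam_add_one_sq (hω : IsPrimitiveRoot ω 3) :
    cubeParam (β + 1) (ω ^ 2) = cubeParam β ω := by
  have hsum := sq_add_self_add_one_of_isPrimitiveRoot_three hω
  have hnum : β + 1 + ω ^ 2 = β + ω := by grind
  have hden : β + 1 + (ω ^ 2) ^ 2 = β + ω ^ 2 := by grind
  rw [cubeParam, cubeParam, hnum, hden]

theorem cubeParam_eq_div_moebius (hω : IsPrimitiveRoot ω 3) :
    cubeParam β ω = ω / moebius ω β := by
  have hden : ω * β - 1 = ω * (β + ω ^ 2) := by
    rw [CharTwo.sub_eq_add, mul_add, ← pow_succ', hω.pow_eq_one]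
  rw [moebius, hden, CharTwo.sub_eq_add, div_div_eq_mul_div,
    mul_div_mul_left _ _ (hω.ne_zero (by norm_num)), cubeParam]

theorem IsTwist.apply_cubeParam {σ : L →+* L} {τ : L →*₀ L} (hτ : IsTwist σ τ)
    (hω : IsPrimitiveRoot ω 3) (hτω : τ ω = ω) (hβ : σ β = β) :
    τ (cubeParam β ω) = cubeParam β ω := by
  rw [cubeParam_eq_div_moebius hω, map_div₀, hτω,
    hτ.apply_moebius hτω (hω.ne_zero (by norm_num)) hβ]

theorem mul_add_mul_add_sq_eq_one (hω : IsPrimitiveRoot ω 3) (hα : α * (β ^ 2 + β + 1) = 1) :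
    α * ((β + ω) * (β + ω ^ 2)) = 1 := by
  have hsum := sq_add_self_add_one_of_isPrimitiveRoot_three hω
  grind

theorem cubeParam_eq (hω : IsPrimitiveRoot ω 3) (hα : α * (β ^ 2 + β + 1) = 1) :
    cubeParam β ω = α * (β + ω) ^ 2 := by
  have hnorm := mul_add_mul_add_sq_eq_one hω hα
  have hden : β + ω ^ 2 ≠ 0 := by
    intro h
    simp [h] at hnorm
  rw [cubeParam, div_eq_iff hden]
  linear_combination -(β + ω) * hnorm

theorem inv_cubeParam_eq (hω : IsPrimitiveRoot ω 3) (hα : α * (β ^ 2 + β + 1) = 1) :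
    (cubeParam β ω)⁻¹ = α * (β + ω ^ 2) ^ 2 := by
  have hω4 : (ω ^ 2) ^ 2 = ω := by linear_combination ω * hω.pow_eq_one
  rw [← cubeParam_eq (hω.pow_of_coprime 2 (by norm_num)) hα, cubeParam, cubeParam, hω4, inv_div]

theorem cubeParam_ne_zero (hω : IsPrimitiveRoot ω 3) (hα : α * (β ^ 2 + β + 1) = 1) :
    cubeParam β ω ≠ 0 := by
  have hnorm := mul_add_mul_add_sq_eq_one hω hα
  rw [cubeParam_eq hω hα]
  refine mul_ne_zero (left_ne_zero_of_mul_eq_one hα) (pow_ne_zero 2 fun h ↦ ?_)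
  simp [h] at hnorm

theorem cubeParam_add_inv (hω : IsPrimitiveRoot ω 3) (hα : α * (β ^ 2 + β + 1) = 1) :
    cubeParam β ω + (cubeParam β ω)⁻¹ = α := by
  have hsum := sq_add_self_add_one_of_isPrimitiveRoot_three hω
  rw [inv_cubeParam_eq hω hα, cubeParam_eq hω hα]
  grind

theorem cubeParam_sq_ne_one (hω : IsPrimitiveRoot ω 3) (hα : α * (β ^ 2 + β + 1) = 1) :
    cubeParam β ω ^ 2 ≠ 1 := by
  intro h
  refine left_ne_zero_of_mul_eq_one hα ?_
  rw [← cubeParam_add_inv hω hα, inv_eq_of_mul_eq_one_left (sq (cubeParam β ω) ▸ h),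
    CharTwo.add_self_eq_zero]

theorem mul_cubeParam_add_sq_mul_inv (hω : IsPrimitiveRoot ω 3)
    (hα : α * (β ^ 2 + β + 1) = 1) :
    ω * cubeParam β ω + ω ^ 2 * (cubeParam β ω)⁻¹ = α * β ^ 2 := by
  have hsum := sq_add_self_add_one_of_isPrimitiveRoot_three hω
  rw [inv_cubeParam_eq hω hα, cubeParam_eq hω hα]
  grind

theorem sq_mul_cubeParam_add_mul_inv (hω : IsPrimitiveRoot ω 3)
    (hα : α * (β ^ 2 + β + 1) = 1) :
    ω ^ 2 * cubeParam β ω + ω * (cubeParam β ω)⁻¹ = α * (β + 1) ^ 2 := by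
  have hsum := sq_add_self_add_one_of_isPrimitiveRoot_three hω
  rw [inv_cubeParam_eq hω hα, cubeParam_eq hω hα]
  grind

end CharTwo

end Field

section Extension

variable {K L : Type*} [Field K] [Field L] [Algebra K L] {σ : L →+* L} {τ : L →*₀ L}
  {c e : L} {n : ℕ} {f : K[X]}

/-- Up to a nonzero constant, `f` is the numerator of `moebius c x ^ n - e` as a function of
`x : K`; the parameters `c` and `e` live in the extension `L`. -/
def IsMoebiusPullback (f : K[X]) (c e : L) (n : ℕ) : Prop :=
  ∃ A : L, A ≠ 0 ∧ ∀ x : K, A * algebraMap K L (f.eval x) =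
    (c * algebraMap K L x - 1) ^ n - e * (algebraMap K L x - c) ^ n

theorem IsMoebiusPullback.eval_eq_zero_iff [NeZero n] (hf : IsMoebiusPullback f c e n)
    (hc1 : c ^ 2 ≠ 1) {x : K} :
    f.eval x = 0 ↔ algebraMap K L x ≠ c ∧ moebius c (algebraMap K L x) ^ n = e := by
  obtain ⟨A, hA, hf⟩ := hf
  have hroot : f.eval x = 0 ↔
      (c * algebraMap K L x - 1) ^ n - e * (algebraMap K L x - c) ^ n = 0 := by
    rw [← hf, mul_eq_zero_iff_left hA, map_eq_zero]
  rcases eq_or_ne (algebraMap K L x) c with hx | hx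
  · simp [hroot, hx, NeZero.ne n, ← sq, sub_eq_zero, hc1]
  · rw [hroot, moebius_pow_eq_iff hx, and_iff_right hx]

theorem IsTwist.bijOn_moebius [NeZero n] (hτ : IsTwist σ τ)
    (hσ : ∀ x : L, σ x = x ↔ x ∈ Set.range (algebraMap K L))
    (hf : IsMoebiusPullback f c e n) (hc : τ c = c) (hc0 : c ≠ 0) (hc1 : c ^ 2 ≠ 1)
    (he : e ≠ 0) (hec : e ≠ c ^ n) :
    Set.BijOn (fun x : K ↦ moebius c (algebraMap K L x)) {x | f.eval x = 0}
      {z | τ z = z ∧ z ^ n = e} := by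
  have hroot {x : K} := hf.eval_eq_zero_iff hc1 (x := x)
  refine ⟨fun x hx ↦ ⟨?_, (hroot.1 hx).2⟩, fun x hx x' hx' h ↦ ?_, fun z ⟨hz, hze⟩ ↦ ?_⟩
  · exact hτ.apply_moebius hc hc0 ((hσ _).2 ⟨x, rfl⟩)
  · apply (algebraMap K L).injective
    rw [← moebius_moebius hc1 (hroot.1 hx).1, ← moebius_moebius hc1 (hroot.1 hx').1]
    exact congrArg (moebius c) h
  · have hz0 : z ≠ 0 := by
      rintro rfl
      exact he (by rw [← hze, zero_pow (NeZero.ne n)])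
    have hzc : z ≠ c := by
      rintro rfl
      exact hec hze.symm
    obtain ⟨x, hx⟩ := (hσ _).1 (hτ.map_moebius hc hc0 hz hz0)
    have hxz : moebius c (algebraMap K L x) = z := by rw [hx, moebius_moebius hc1 hzc]
    exact ⟨x, hroot.2 ⟨hx ▸ moebius_ne hc1 hzc, hxz ▸ hze⟩, hxz⟩

theorem IsTwist.ncard_roots (hn : Odd n) (hτ : IsTwist σ τ)
    (hσ : ∀ x : L, σ x = x ↔ x ∈ Set.range (algebraMap K L))
    {ζ : L} (hζ : IsPrimitiveRoot ζ n) (hτζ : τ ζ = ζ)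
    (hf : IsMoebiusPullback f c e n) (hc : τ c = c) (hc0 : c ≠ 0) (hc1 : c ^ 2 ≠ 1)
    (hτe : τ e = e) (he : e ≠ 0) (hec : e ≠ c ^ n) (hroot : ∃ y, σ (σ y) = y ∧ y ^ n = e) :
    {x : K | f.eval x = 0}.ncard = n := by
  have : NeZero n := ⟨hn.pos.ne'⟩
  obtain ⟨y, hyy, rfl⟩ := hroot
  have hy : τ y = y :=
    apply_eq_self_of_apply_pow_eq hn hζ hτζ hτe (by rw [hτ.apply_apply, hyy])
  have hfixed : {z : L | τ z = z ∧ z ^ n = y ^ n} = {z : L | z ^ n = y ^ n} := by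
    refine Set.ext fun z ↦ and_iff_right_of_imp fun hz ↦ ?_
    have hmem : z ∈ nthRoots n (y ^ n) := (mem_nthRoots (NeZero.pos n)).2 hz
    rw [hζ.nthRoots_eq rfl, Multiset.mem_map] at hmem
    obtain ⟨i, -, rfl⟩ := hmem
    rw [map_mul, map_pow, hτζ, hy]
  rw [(hτ.bijOn_moebius hσ hf hc hc0 hc1 he hec).ncard_eq, hfixed,
    ncard_setOf_pow_eq hζ (ne_zero_pow (NeZero.ne n) he)]

theorem IsTwist.roots_eq_zero [NeZero n] (hτ : IsTwist σ τ)
    (hσ : ∀ x : K, σ (algebraMap K L x) = algebraMap K L x)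
    (hf : IsMoebiusPullback f c e n) (hc : τ c = c) (hc0 : c ≠ 0) (hc1 : c ^ 2 ≠ 1)
    (hroot : ¬ ∃ y, σ (σ y) = y ∧ y ^ n = e) : f.roots = 0 := by
  refine Multiset.eq_zero_of_forall_notMem fun x hx ↦ hroot ?_
  have hfixed := hτ.apply_moebius hc hc0 (hσ x)
  exact ⟨_, by rw [← hτ.apply_apply, hfixed, hfixed],
    ((hf.eval_eq_zero_iff hc1).1 (isRoot_of_mem_roots hx)).2⟩

theorem IsTwist.ncard_roots_eq_three_or_irreducible (hτ : IsTwist σ τ)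
    (hσ : ∀ x : L, σ x = x ↔ x ∈ Set.range (algebraMap K L))
    {ω : L} (hω : IsPrimitiveRoot ω 3) (hτω : τ ω = ω) (hdeg : f.natDegree = 3)
    (hf : IsMoebiusPullback f c e 3) (hc : τ c = c) (hc0 : c ≠ 0) (hc1 : c ^ 2 ≠ 1)
    (hτe : τ e = e) (he : e ≠ 0) (hec : e ≠ c ^ 3) :
    ((∃ y, σ (σ y) = y ∧ y ^ 3 = e) → {x : K | f.eval x = 0}.ncard = 3) ∧
      (¬ (∃ y, σ (σ y) = y ∧ y ^ 3 = e) → Irreducible f) := by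
  refine ⟨hτ.ncard_roots (by decide) hσ hω hτω hf hc hc0 hc1 hτe he hec, fun hroot ↦ ?_⟩
  rw [irreducible_iff_roots_eq_zero_of_degree_le_three (by omega) (by omega)]
  exact hτ.roots_eq_zero (fun x ↦ (hσ _).2 ⟨x, rfl⟩) hf hc hc0 hc1 hroot

section CharTwo

variable [CharP L 2] {ω : L} {a b : K}

theorem isMoebiusPullback_X_pow_three_add_X_add_C (hc0 : c ≠ 0) (hc1 : c ^ 2 ≠ 1)
    (ha : algebraMap K L a = c + c⁻¹) : IsMoebiusPullback (X ^ 3 + X + C a) c c 3 := by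
  have hfactor : c * (c ^ 2 - 1) ≠ 0 := mul_ne_zero hc0 (sub_ne_zero.2 hc1)
  refine ⟨_, hfactor, fun x ↦ ?_⟩
  simp only [eval_add, eval_pow, eval_X, eval_C, map_add, map_pow, ha]
  grind

theorem isMoebiusPullback_cubic (hω : IsPrimitiveRoot ω 3) {p r : K} (hc0 : c ≠ 0)
    (hp : algebraMap K L p = ω * c + ω ^ 2 * c⁻¹) (hr : algebraMap K L r = ω ^ 2 * c + ω * c⁻¹) :
    IsMoebiusPullback (C p * X ^ 3 + X ^ 2 + C r * X + C (p ^ 2)) c (ω * c) 3 := by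
  have hfactor : ω ^ 2 * c ^ 2 ≠ 0 :=
    mul_ne_zero (pow_ne_zero 2 (hω.ne_zero (by norm_num))) (pow_ne_zero 2 hc0)
  have hsum := sq_add_self_add_one_of_isPrimitiveRoot_three hω
  refine ⟨_, hfactor, fun x ↦ ?_⟩
  simp only [eval_add, eval_mul, eval_pow, eval_X, eval_C, map_add, map_mul, map_pow, hp, hr]
  grind

theorem ncard_roots_X_pow_three_add_X_add_C_or_irreducible
    (hσ : ∀ x : L, σ x = x ↔ x ∈ Set.range (algebraMap K L)) (hω : IsPrimitiveRoot ω 3)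
    (ha : a * (b ^ 2 + b + 1) = 1) :
    ((∃ y, σ (σ y) = y ∧ y ^ 3 = cubeParam (algebraMap K L b) ω) →
        {x : K | (X ^ 3 + X + C a).eval x = 0}.ncard = 3) ∧
      (¬ (∃ y, σ (σ y) = y ∧ y ^ 3 = cubeParam (algebraMap K L b) ω) →
        Irreducible (X ^ 3 + X + C a)) := by
  obtain ⟨τ, hτ, hτω⟩ := exists_isTwist_apply_eq σ hω
  have hα : algebraMap K L a * (algebraMap K L b ^ 2 + algebraMap K L b + 1) = 1 := by
    simpa using congrArg (algebraMap K L) ha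
  have hc := hτ.apply_cubeParam hω hτω ((hσ _).2 ⟨b, rfl⟩)
  have hc0 := cubeParam_ne_zero hω hα
  have hc1 := cubeParam_sq_ne_one hω hα
  have hdeg : (X ^ 3 + X + C a).natDegree = 3 := by compute_degree!
  have hf := isMoebiusPullback_X_pow_three_add_X_add_C hc0 hc1 (cubeParam_add_inv hω hα).symm
  refine hτ.ncard_roots_eq_three_or_irreducible hσ hω hτω hdeg hf hc hc0 hc1 hc hc0 fun h ↦ hc1 ?_
  exact mul_left_cancel₀ hc0 (by linear_combination -h)

theorem ncard_roots_cubic_or_irreducible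
    (hσ : ∀ x : L, σ x = x ↔ x ∈ Set.range (algebraMap K L)) (hω : IsPrimitiveRoot ω 3)
    (ha : a * (b ^ 2 + b + 1) = 1) (hb : b ≠ 0) :
    ((∃ y, σ (σ y) = y ∧ y ^ 3 = ω * cubeParam (algebraMap K L b) ω) →
        {x : K | (C (a * b ^ 2) * X ^ 3 + X ^ 2 + C (a * (b + 1) ^ 2) * X +
          C (a ^ 2 * b ^ 4)).eval x = 0}.ncard = 3) ∧
      (¬ (∃ y, σ (σ y) = y ∧ y ^ 3 = ω * cubeParam (algebraMap K L b) ω) →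
        Irreducible (C (a * b ^ 2) * X ^ 3 + X ^ 2 + C (a * (b + 1) ^ 2) * X +
          C (a ^ 2 * b ^ 4))) := by
  obtain ⟨τ, hτ, hτω⟩ := exists_isTwist_apply_eq σ hω
  have hα : algebraMap K L a * (algebraMap K L b ^ 2 + algebraMap K L b + 1) = 1 := by
    simpa using congrArg (algebraMap K L) ha
  have hω0 : ω ≠ 0 := hω.ne_zero (by norm_num)
  have hc := hτ.apply_cubeParam hω hτω ((hσ _).2 ⟨b, rfl⟩)
  have hc0 := cubeParam_ne_zero hω hα
  have hlead : a * b ^ 2 ≠ 0 := mul_ne_zero (left_ne_zero_of_mul_eq_one ha) (pow_ne_zero 2 hb)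
  have hdeg : (C (a * b ^ 2) * X ^ 3 + X ^ 2 + C (a * (b + 1) ^ 2) * X +
      C (a ^ 2 * b ^ 4)).natDegree = 3 := by
    compute_degree!
    exact mul_ne_zero_iff.1 hlead |>.imp_right (pow_ne_zero_iff two_ne_zero).1
  have hp : algebraMap K L (a * b ^ 2) = ω * cubeParam (algebraMap K L b) ω +
      ω ^ 2 * (cubeParam (algebraMap K L b) ω)⁻¹ := by
    simp [mul_cubeParam_add_sq_mul_inv hω hα]
  have hr : algebraMap K L (a * (b + 1) ^ 2) = ω ^ 2 * cubeParam (algebraMap K L b) ω +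
      ω * (cubeParam (algebraMap K L b) ω)⁻¹ := by
    simp [sq_mul_cubeParam_add_mul_inv hω hα]
  have hf := isMoebiusPullback_cubic hω hc0 hp hr
  rw [show (a * b ^ 2) ^ 2 = a ^ 2 * b ^ 4 by ring] at hf
  refine hτ.ncard_roots_eq_three_or_irreducible hσ hω hτω hdeg hf hc hc0
    (cubeParam_sq_ne_one hω hα) (by rw [map_mul, hτω, hc]) (mul_ne_zero hω0 hc0) fun h ↦ ?_
  refine hlead ((algebraMap K L).injective ?_)
  have hsq : cubeParam (algebraMap K L b) ω ^ 2 = ω :=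
    mul_left_cancel₀ hc0 (by linear_combination -h)
  rw [hp, map_zero, ← hsq]
  field_simp
  grind

end CharTwo

end Extension

theorem pow_card_eq_self_iff_mem_range_algebraMap {K L : Type*} [Field K] [Fintype K] [Field L]
    [Algebra K L] (x : L) :
    x ^ Fintype.card K = x ↔ x ∈ Set.range (algebraMap K L) := by
  refine ⟨fun hx ↦ ?_, ?_⟩
  · have hsplits : (X ^ Fintype.card K - X : K[X]).Splits := by
      rw [splits_iff_card_roots, FiniteField.roots_X_pow_card_sub_X,
        FiniteField.X_pow_card_sub_X_natDegree_eq K Fintype.one_lt_card]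
      exact Finset.card_univ
    refine hsplits.mem_range_of_isRoot
      (FiniteField.X_pow_card_sub_X_ne_zero K Fintype.one_lt_card) ?_
    simp [hx]
  · rintro ⟨k, rfl⟩
    rw [← map_pow, FiniteField.pow_card]

theorem fi_roots_or_irreducible_general {K L : Type*} [Field K] [CharP K 2] [Field L]
    [Algebra K L] (σ : L →+* L) (hσ : ∀ x : L, σ x = x ↔ x ∈ Set.range (algebraMap K L))
    (a b : K) (ha2 : a ^ 2 ≠ a) (hb : b ^ 2 + b = a⁻¹ + 1) (ω : L) (hω : IsPrimitiveRoot ω 3)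
    (c : L) (hc : c = (algebraMap K L b + ω) / (algebraMap K L b + ω ^ 2))
    (f0 f1 f2 : K[X]) (hf0 : f0 = X ^ 3 + X + C a)
    (hf1 : f1 = C (a * b ^ 2) * X ^ 3 + X ^ 2 + C (a * (b + 1) ^ 2) * X + C (a ^ 2 * b ^ 4))
    (hf2 : f2 = C (a * (b + 1) ^ 2) * X ^ 3 + X ^ 2 + C (a * b ^ 2) * X +
      C (a ^ 2 * (b + 1) ^ 4)) :
    ((∃ y, σ (σ y) = y ∧ y ^ 3 = c) → {x : K | f0.eval x = 0}.ncard = 3) ∧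
    (¬ (∃ y, σ (σ y) = y ∧ y ^ 3 = c) → Irreducible f0) ∧
    ((∃ y, σ (σ y) = y ∧ y ^ 3 = ω * c) → {x : K | f1.eval x = 0}.ncard = 3) ∧
    (¬ (∃ y, σ (σ y) = y ∧ y ^ 3 = ω * c) → Irreducible f1) ∧
    ((∃ y, σ (σ y) = y ∧ y ^ 3 = ω ^ 2 * c) → {x : K | f2.eval x = 0}.ncard = 3) ∧
    (¬ (∃ y, σ (σ y) = y ∧ y ^ 3 = ω ^ 2 * c) → Irreducible f2) := by
  have : CharP L 2 := charP_of_injective_algebraMap (algebraMap K L).injective 2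
  have ha0 : a ≠ 0 := by rintro rfl; simp at ha2
  have hab : a * (b ^ 2 + b + 1) = 1 := by
    rw [hb, add_assoc, CharTwo.add_self_eq_zero, add_zero, mul_inv_cancel₀ ha0]
  have hb0 : b ≠ 0 := by rintro rfl; apply ha2; grind
  have hb1 : b + 1 ≠ 0 := by intro h; apply ha2; grind
  have hab' : a * ((b + 1) ^ 2 + (b + 1) + 1) = 1 := by grind
  obtain ⟨roots0, irred0⟩ := ncard_roots_X_pow_three_add_X_add_C_or_irreducible hσ hω hab
  obtain ⟨roots1, irred1⟩ := ncard_roots_cubic_or_irreducible hσ hω hab hb0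
  -- `f_2` and `ω ^ 2 * c` arise from `f_1` and `ω * c` by replacing `(b, ω)` with `(b + 1, ω ^ 2)`.
  obtain ⟨roots2, irred2⟩ := ncard_roots_cubic_or_irreducible hσ
    (hω.pow_of_coprime 2 (by norm_num)) hab' hb1
  rw [map_add, map_one, cubeParam_add_one_sq hω, add_assoc b, CharTwo.add_self_eq_zero,
    add_zero] at roots2 irred2
  subst hf0 hf1 hf2 hc
  exact ⟨roots0, irred0, roots1, irred1, roots2, irred2⟩

/-- Lemma 5.1: for each `i ∈ {0,1,2}`, the polynomial `f_i` has three distinct roots in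
`F_q` if `ω^i·c` is a cube in `F_{q²}`, and is irreducible over `F_q` otherwise. -/
theorem fi_roots_or_irreducible
    (m : ℕ) (hm : 0 < m) (q : ℕ) (hq : q = 2 ^ m)
    (a b : GaloisField 2 m)
    (ha2 : a ^ 2 ≠ a)
    (htr : ∑ i ∈ Finset.range m, a⁻¹ ^ 2 ^ i = (m : GaloisField 2 m))
    (hb : b ^ 2 + b = a⁻¹ + 1)
    (ω : AlgebraicClosure (GaloisField 2 m)) (hω4 : ω ^ 4 = ω) (hω2 : ω ^ 2 ≠ ω)
    (c : AlgebraicClosure (GaloisField 2 m))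
    (hc : c = (algebraMap (GaloisField 2 m) (AlgebraicClosure (GaloisField 2 m)) b + ω) /
      (algebraMap (GaloisField 2 m) (AlgebraicClosure (GaloisField 2 m)) b + ω ^ 2))
    (f0 f1 f2 : Polynomial (GaloisField 2 m))
    (hf0 : f0 = X ^ 3 + X + C a)
    (hf1 : f1 = C (a * b ^ 2) * X ^ 3 + X ^ 2 + C (a * (b + 1) ^ 2) * X +
      C (a ^ 2 * b ^ 4))
    (hf2 : f2 = C (a * (b + 1) ^ 2) * X ^ 3 + X ^ 2 + C (a * b ^ 2) * X +
      C (a ^ 2 * (b + 1) ^ 4)) :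
    ((∃ y : AlgebraicClosure (GaloisField 2 m), y ^ q ^ 2 = y ∧ y ^ 3 = c) →
      {x : GaloisField 2 m | Polynomial.eval x f0 = 0}.ncard = 3) ∧
    (¬ (∃ y : AlgebraicClosure (GaloisField 2 m), y ^ q ^ 2 = y ∧ y ^ 3 = c) →
      Irreducible f0) ∧
    ((∃ y : AlgebraicClosure (GaloisField 2 m), y ^ q ^ 2 = y ∧ y ^ 3 = ω * c) →
      {x : GaloisField 2 m | Polynomial.eval x f1 = 0}.ncard = 3) ∧
    (¬ (∃ y : AlgebraicClosure (GaloisField 2 m), y ^ q ^ 2 = y ∧ y ^ 3 = ω * c) →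
      Irreducible f1) ∧
    ((∃ y : AlgebraicClosure (GaloisField 2 m), y ^ q ^ 2 = y ∧ y ^ 3 = ω ^ 2 * c) →
      {x : GaloisField 2 m | Polynomial.eval x f2 = 0}.ncard = 3) ∧
    (¬ (∃ y : AlgebraicClosure (GaloisField 2 m), y ^ q ^ 2 = y ∧ y ^ 3 = ω ^ 2 * c) →
      Irreducible f2) := by
  have : Fintype (GaloisField 2 m) := Fintype.ofFinite _
  have hcard : Fintype.card (GaloisField 2 m) = q := by
    rw [← Nat.card_eq_fintype_card, GaloisField.card 2 m hm.ne', hq]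
  have key := fi_roots_or_irreducible_general
    (FiniteField.frobeniusAlgHom (GaloisField 2 m) (AlgebraicClosure (GaloisField 2 m))).toRingHom
    pow_card_eq_self_iff_mem_range_algebraMap a b ha2 hb ω
    (isPrimitiveRoot_three_of_pow_four_eq hω4 hω2) c hc f0 f1 f2 hf0 hf1 hf2
  simpa [hcard, ← pow_mul, ← sq] using key
end

section
/- The element c is a cube in F_{q²} if and only if D_n(a) = 0, where n := ⌊(q+1)/3⌋. -/
open Polynomial

local notation "K" => AlgebraicClosure (ZMod 2)

/-!
Since `(b + ω) * (b + ω ^ 2) = b ^ 2 + b + 1 = a⁻¹` and `ω + ω ^ 2 = 1`, the element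
`c = (b + ω) / (b + ω ^ 2)` satisfies `c + c⁻¹ = a`. Hence `D_n(a) = c ^ n + c ^ (-n)`, which in
characteristic two vanishes exactly when `c ^ n = 1`.

The `q`-Frobenius fixes `b` and either fixes `ω` (`q = 3 * n + 1`) or swaps it with `ω ^ 2`
(`q + 1 = 3 * n`), so `c ^ q` is `c` or `c⁻¹`, and `c ^ (3 * n) = 1` in both cases. As
`(q ^ 2 - 1) / 3 = n * s` with `s` one of `q + 1`, `q - 1`, prime to `3`, Euler's criterion
`c ^ (n * s) = 1` for cubes of `F_{q²}` collapses to `c ^ n = 1`.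
-/

section Powers

variable {F : Type*} [Field F] {c : F} {l k N : ℕ}

theorem exists_pow_eq_of_pow_eq_one (hN : 1 < N) (hNlk : N = l * k + 1)
    (hsplits : (X ^ N - X : F[X]).Splits) (hc : c ^ k = 1) : ∃ y : F, y ^ l = c := by
  have hl : 0 < l := Nat.pos_of_ne_zero (by rintro rfl; omega)
  have hdvd : (X ^ l - C c : F[X]) ∣ X ^ N - X := by
    have hfactor : (X ^ N - X : F[X]) = ((X ^ l) ^ k - C c ^ k) * X := by
      rw [← C_pow, hc, C_1, hNlk]
      ring
    exact hfactor ▸ (sub_dvd_pow_sub_pow _ _ k).mul_right X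
  obtain ⟨y, hy⟩ :=
    (hsplits.of_dvd (FiniteField.X_pow_card_sub_X_ne_zero F hN) hdvd).exists_eval_eq_zero
      (by simp [degree_X_pow_sub_C hl, hl.ne'])
  exact ⟨y, by simpa [sub_eq_zero] using hy⟩

theorem exists_pow_eq_iff_pow_eq_one (hN : 1 < N) (hNlk : N = l * k + 1)
    (hsplits : (X ^ N - X : F[X]).Splits) (hc : c ≠ 0) :
    (∃ y : F, y ^ N = y ∧ y ^ l = c) ↔ c ^ k = 1 := by
  constructor
  · rintro ⟨y, hyN, rfl⟩
    have hy : y ≠ 0 := ne_zero_pow (by rintro rfl; omega) hc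
    rw [hNlk, pow_succ, pow_mul] at hyN
    exact (mul_eq_right₀ hy).mp hyN
  · intro hck
    obtain ⟨y, hy⟩ := exists_pow_eq_of_pow_eq_one hN hNlk hsplits hck
    exact ⟨y, by rw [hNlk, pow_succ, pow_mul, hy, hck, one_mul], hy⟩

theorem exists_pow_eq_iff_pow_eq_one_of_coprime {s : ℕ} (hN : 1 < N)
    (hNlks : N = l * (k * s) + 1) (hs : s.Coprime l) (hsplits : (X ^ N - X : F[X]).Splits)
    (hc : c ≠ 0) (hclk : c ^ (l * k) = 1) :
    (∃ y : F, y ^ N = y ∧ y ^ l = c) ↔ c ^ k = 1 := by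
  have hckl : (c ^ k) ^ l = 1 := by rw [← pow_mul', hclk]
  rw [exists_pow_eq_iff_pow_eq_one hN hNlks hsplits hc, pow_mul,
    ← pow_eq_one_iff_of_coprime (a := c ^ k) hs, and_iff_left hckl]

end Powers

section CubeRootOfUnity

variable {R : Type*} [CommRing R] {ω : R}

theorem sq_add_self_add_one_eq_zero_of_pow_four_eq_self [IsDomain R] (hω4 : ω ^ 4 = ω)
    (hω2 : ω ^ 2 ≠ ω) : ω ^ 2 + ω + 1 = 0 := by
  have hfactor : (ω ^ 2 - ω) * (ω ^ 2 + ω + 1) = 0 := by linear_combination hω4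
  exact (mul_eq_zero.mp hfactor).resolve_left (sub_ne_zero.mpr hω2)

theorem pow_three_eq_one_of_sq_add_self_add_one_eq_zero (hω : ω ^ 2 + ω + 1 = 0) :
    ω ^ 3 = 1 := by
  linear_combination (ω - 1) * hω

theorem add_mul_add_sq_eq (hω : ω ^ 2 + ω + 1 = 0) (b : R) :
    (b + ω) * (b + ω ^ 2) = b ^ 2 - b + 1 := by
  linear_combination (b + ω - 1) * hω

end CubeRootOfUnity

section Arithmetic

variable {q : ℕ}

theorem not_three_dvd_two_pow (m : ℕ) : ¬ 3 ∣ 2 ^ m :=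
  fun h ↦ by simpa using Nat.prime_three.dvd_of_dvd_pow h

theorem eq_or_add_one_eq_three_mul_div (hq : ¬ 3 ∣ q) :
    q = 3 * ((q + 1) / 3) + 1 ∨ q + 1 = 3 * ((q + 1) / 3) := by
  omega

theorem exists_coprime_three_and_sq_eq (hq : ¬ 3 ∣ q) :
    ∃ s : ℕ, s.Coprime 3 ∧ q ^ 2 = 3 * ((q + 1) / 3 * s) + 1 := by
  have coprime_of_not_dvd {s : ℕ} (hs : ¬ 3 ∣ s) : s.Coprime 3 :=
    ((Nat.prime_three.coprime_iff_not_dvd).mpr hs).symm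
  rcases eq_or_add_one_eq_three_mul_div hq with h | h
  · refine ⟨q + 1, coprime_of_not_dvd (by omega), ?_⟩
    generalize (q + 1) / 3 = n at h
    subst h
    ring
  · refine ⟨q - 1, coprime_of_not_dvd (by omega), ?_⟩
    obtain ⟨r, rfl⟩ : ∃ r, q = r + 1 := ⟨q - 1, by omega⟩
    rw [← mul_assoc, ← h, Nat.add_sub_cancel]
    ring

end Arithmetic

theorem add_div_add_sq_pow_expChar_pow {F : Type*} [Field F] {p m : ℕ} [ExpChar F p] {b : F}
    (hb : b ^ p ^ m = b) (ω : F) :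
    ((b + ω) / (b + ω ^ 2)) ^ p ^ m = (b + ω ^ p ^ m) / (b + (ω ^ p ^ m) ^ 2) := by
  rw [div_pow, add_pow_expChar_pow, add_pow_expChar_pow, hb, pow_right_comm]

section CharTwo

variable {F : Type*} [Field F] [CharP F 2]

theorem eval_dickson_add_inv_eq_zero_iff {x : F} (hx : x ≠ 0) (n : ℕ) :
    (dickson 1 (1 : F) n).eval (x + x⁻¹) = 0 ↔ x ^ n = 1 := by
  rw [dickson_one_one_eval_add_inv _ _ (mul_inv_cancel₀ hx), inv_pow, CharTwo.add_eq_zero,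
    self_eq_inv₀, CharTwo.neg_eq]
  simp [pow_ne_zero n hx]

variable {b ω : F} {m n : ℕ}

theorem add_div_add_sq_add_inv (hω : ω ^ 2 + ω + 1 = 0) (h₁ : b + ω ≠ 0) (h₂ : b + ω ^ 2 ≠ 0) :
    (b + ω) / (b + ω ^ 2) + ((b + ω) / (b + ω ^ 2))⁻¹ = ((b + ω) * (b + ω ^ 2))⁻¹ := by
  have hsum : (b + ω) + (b + ω ^ 2) = 1 := by
    linear_combination hω + (b - 1) * CharTwo.two_eq_zero (R := F)
  have hsq : (b + ω) ^ 2 + (b + ω ^ 2) ^ 2 = 1 := by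
    rw [← CharTwo.add_sq, hsum, one_pow]
  field_simp
  exact hsq

theorem add_div_add_sq_pow_eq_one_of_two_pow_eq (hm : 2 ^ m = 3 * n + 1) (hb : b ^ 2 ^ m = b)
    (hω : ω ^ 3 = 1) (h₁ : b + ω ≠ 0) (h₂ : b + ω ^ 2 ≠ 0) :
    ((b + ω) / (b + ω ^ 2)) ^ (3 * n) = 1 := by
  have hωq : ω ^ 2 ^ m = ω := by rw [hm, pow_succ, pow_mul, hω, one_pow, one_mul]
  have hfixed := add_div_add_sq_pow_expChar_pow hb ω
  rw [hωq, hm, pow_succ] at hfixed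
  exact (mul_eq_right₀ (div_ne_zero h₁ h₂)).mp hfixed

theorem add_div_add_sq_pow_eq_one_of_two_pow_add_one_eq (hm : 2 ^ m + 1 = 3 * n)
    (hb : b ^ 2 ^ m = b) (hω : ω ^ 3 = 1) (h₁ : b + ω ≠ 0) (h₂ : b + ω ^ 2 ≠ 0) :
    ((b + ω) / (b + ω ^ 2)) ^ (3 * n) = 1 := by
  have hω0 : ω ≠ 0 := ne_zero_pow three_ne_zero (hω ▸ one_ne_zero)
  have hωq : ω ^ 2 ^ m = ω ^ 2 := by
    refine mul_right_cancel₀ hω0 ?_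
    rw [← pow_succ, ← pow_succ, hm, pow_mul, hω, one_pow]
  have hωsq : (ω ^ 2) ^ 2 = ω := by linear_combination ω * hω
  rw [← hm, pow_succ, add_div_add_sq_pow_expChar_pow hb, hωq, hωsq]
  field_simp

theorem add_div_add_sq_pow_three_mul_eq_one (hb : b ^ 2 ^ m = b) (hω : ω ^ 3 = 1)
    (h₁ : b + ω ≠ 0) (h₂ : b + ω ^ 2 ≠ 0) :
    ((b + ω) / (b + ω ^ 2)) ^ (3 * ((2 ^ m + 1) / 3)) = 1 :=
  (eq_or_add_one_eq_three_mul_div (not_three_dvd_two_pow m)).elim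
    (add_div_add_sq_pow_eq_one_of_two_pow_eq · hb hω h₁ h₂)
    (add_div_add_sq_pow_eq_one_of_two_pow_add_one_eq · hb hω h₁ h₂)

end CharTwo

/-- The hypothesis `hsplits` says that `F` contains `F_{q²}`, for `q = 2 ^ m`. -/
theorem cube_iff_dickson_general {F : Type*} [Field F] [CharP F 2] {m : ℕ} (hm : m ≠ 0)
    (hsplits : (X ^ (2 ^ m) ^ 2 - X : F[X]).Splits) {a b ω : F} (ha : a ≠ 0)
    (hbq : b ^ 2 ^ m = b) (hb : b ^ 2 + b = a⁻¹ + 1) (hω : ω ^ 2 + ω + 1 = 0) :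
    (∃ y : F, y ^ (2 ^ m) ^ 2 = y ∧ y ^ 3 = (b + ω) / (b + ω ^ 2)) ↔
      (dickson 1 (1 : F) ((2 ^ m + 1) / 3)).eval a = 0 := by
  have hprod : (b + ω) * (b + ω ^ 2) = a⁻¹ := by
    rw [add_mul_add_sq_eq hω, CharTwo.sub_eq_add, hb, CharTwo.add_cancel_right]
  obtain ⟨h₁, h₂⟩ : b + ω ≠ 0 ∧ b + ω ^ 2 ≠ 0 :=
    mul_ne_zero_iff.mp (hprod ▸ inv_ne_zero ha)
  have hc : (b + ω) / (b + ω ^ 2) ≠ 0 := div_ne_zero h₁ h₂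
  have hca : (b + ω) / (b + ω ^ 2) + ((b + ω) / (b + ω ^ 2))⁻¹ = a := by
    rw [add_div_add_sq_add_inv hω h₁ h₂, hprod, inv_inv]
  have hc3 := add_div_add_sq_pow_three_mul_eq_one hbq
    (pow_three_eq_one_of_sq_add_self_add_one_eq_zero hω) h₁ h₂
  obtain ⟨s, hs, hsq⟩ := exists_coprime_three_and_sq_eq (not_three_dvd_two_pow m)
  have hq2 : 1 < (2 ^ m) ^ 2 := Nat.one_lt_pow two_ne_zero (Nat.one_lt_two_pow hm)
  calc (∃ y : F, y ^ (2 ^ m) ^ 2 = y ∧ y ^ 3 = (b + ω) / (b + ω ^ 2))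
      ↔ ((b + ω) / (b + ω ^ 2)) ^ ((2 ^ m + 1) / 3) = 1 :=
        exists_pow_eq_iff_pow_eq_one_of_coprime hq2 hsq hs hsplits hc hc3
    _ ↔ (dickson 1 (1 : F) ((2 ^ m + 1) / 3)).eval a = 0 := by
        rw [← eval_dickson_add_inv_eq_zero_iff hc, hca]

/-- Lemma 5.3: `c = (b+ω)/(b+ω²)` is a cube in `F_{q²}` if and only if `D_n(a) = 0`,
where `n = ⌊(q+1)/3⌋`. -/
theorem cube_iff_dickson
    (m : ℕ) (hm : 0 < m) (q : ℕ) (hq : q = 2 ^ m)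
    (n : ℕ) (hn : n = (q + 1) / 3)
    (a : K) (haq : a ^ q = a) (ha2 : a ^ 2 ≠ a)
    (htr : ∑ i ∈ Finset.range m, a⁻¹ ^ 2 ^ i = (m : K))
    (b : K) (hbq : b ^ q = b) (hb : b ^ 2 + b = a⁻¹ + 1)
    (ω : K) (hω4 : ω ^ 4 = ω) (hω2 : ω ^ 2 ≠ ω)
    (c : K) (hc : c = (b + ω) / (b + ω ^ 2)) :
    (∃ y : K, y ^ q ^ 2 = y ∧ y ^ 3 = c) ↔
      Polynomial.eval a (Polynomial.dickson 1 (1 : K) n) = 0 := by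
  subst hq hn hc
  have ha : a ≠ 0 := by rintro rfl; simp at ha2
  exact cube_iff_dickson_general hm.ne' (IsAlgClosed.splits _) ha hbq hb
    (sq_add_self_add_one_eq_zero_of_pow_four_eq_self hω4 hω2)
end
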